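/- arXiv:1309.5428 — 3 statements merged into one kernel-verified Lean document; each statement's English description precedes it below -/
import Mathlib

section
/- Let R = (R_n : n ∈ ℕ) be a computable sequence of subsets of ℕ that admits no computable R-cohesive set. Then there exists a Martin-Löf random X ∈ 2^ℕ such that for every use-monotone Turing functional Φ, the set dom Φ(X) is not R-cohesive. -/
open MeasureTheory

/-- Finite binary strings. -/
abbrev BinStr := List Bool

/-- `σ` is a (finite) initial segment of `X ∈ 2^ℕ`. -/
def IsInitSeg (σ : BinStr) (X : ℕ → Bool) : Prop :=
  ∀ i, i < σ.length → σ.getD i false = X i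

/-- `A ⊆* B` : all but finitely many elements of `A` are in `B`. -/
def SubsetStar (A B : Set ℕ) : Prop := (A \ B).Finite

/-- `C` is cohesive for the sequence `R`. -/
def Cohesive (R : ℕ → Set ℕ) (C : Set ℕ) : Prop :=
  C.Infinite ∧ ∀ n, SubsetStar C (R n) ∨ SubsetStar C (R n)ᶜ

/-- A set of naturals is computable if its characteristic function is computable. -/
def ComputableSet (A : Set ℕ) : Prop :=
  ∃ f : ℕ → Bool, Computable f ∧ ∀ n, n ∈ A ↔ f n = true

/-- A sequence of sets is computable if `{(n,x) : x ∈ R n}` is computable. -/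
def ComputableSeq (R : ℕ → Set ℕ) : Prop :=
  ∃ f : ℕ → ℕ → Bool, Computable₂ f ∧ ∀ n x, x ∈ R n ↔ f n x = true

/-- A use-monotone Turing functional: a partial computable map from
(strings × ℕ) to ℕ whose domain is monotone along extension of strings. -/
structure TuringFunctional where
  Φ : BinStr × ℕ →. ℕ
  partrec : Partrec Φ
  mono : ∀ ⦃σ τ : BinStr⦄, σ <+: τ → ∀ x, (Φ (σ, x)).Dom → (Φ (τ, x)).Dom

/-- `dom Φ(σ)` for a finite string `σ`. -/
def TuringFunctional.domStr (F : TuringFunctional) (σ : BinStr) : Set ℕ :=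
  {x | (F.Φ (σ, x)).Dom}

/-- `dom Φ(X)` for `X ∈ 2^ℕ`: the union of `dom Φ(σ)` over initial segments `σ` of `X`. -/
def TuringFunctional.domF (F : TuringFunctional) (X : ℕ → Bool) : Set ℕ :=
  {x | ∃ σ, IsInitSeg σ X ∧ (F.Φ (σ, x)).Dom}

/-- `C ≤_T X` via a monotone partial computable functional with Boolean values. -/
def ReducibleToFun (C : Set ℕ) (X : ℕ → Bool) : Prop :=
  ∃ Ψ : BinStr × ℕ →. Bool,
    Partrec Ψ ∧
    (∀ ⦃σ τ : BinStr⦄, σ <+: τ → ∀ x b, b ∈ Ψ (σ, x) → b ∈ Ψ (τ, x)) ∧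
    (∀ x, ∃ σ, IsInitSeg σ X ∧ (Ψ (σ, x)).Dom) ∧
    (∀ σ x b, IsInitSeg σ X → b ∈ Ψ (σ, x) → (b = true ↔ x ∈ C))

/-- `S` is a `Σ⁰₃` set of binary strings. -/
def Sigma3 (S : Set BinStr) : Prop :=
  ∃ P : BinStr → ℕ → ℕ → ℕ → Bool,
    (Computable fun q : BinStr × ℕ × ℕ × ℕ => P q.1 q.2.1 q.2.2.1 q.2.2.2) ∧
    ∀ σ, σ ∈ S ↔ ∃ a, ∀ b, ∃ c, P σ a b c = true

/-- `G ∈ 2^ℕ` is `3`-generic: it meets or strongly avoids every `Σ⁰₃` set of strings. -/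
def ThreeGeneric (G : ℕ → Bool) : Prop :=
  ∀ S : Set BinStr, Sigma3 S →
    (∃ σ, IsInitSeg σ G ∧ σ ∈ S) ∨ (∃ σ, IsInitSeg σ G ∧ ∀ τ, σ <+: τ → τ ∉ S)

/-- Binary trees: sets of strings closed under initial segments. -/
def IsTree (T : Set BinStr) : Prop := ∀ σ ∈ T, ∀ τ, τ <+: σ → τ ∈ T

/-- `[T]`, the set of infinite paths through `T`. -/
def paths (T : Set BinStr) : Set (ℕ → Bool) := {X | ∀ σ, IsInitSeg σ X → σ ∈ T}

/-- A computable set of binary strings. -/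
def ComputableStrSet (T : Set BinStr) : Prop :=
  ∃ f : BinStr → Bool, Computable f ∧ ∀ σ, σ ∈ T ↔ f σ = true

/-- The fair-coin (uniform) product measure on Cantor space `ℕ → Bool`, realized as
the pushforward of Lebesgue measure on `[0,1)` under the binary-digit map. -/
noncomputable def fairCoin : Measure (ℕ → Bool) :=
  Measure.map (fun x : ℝ => fun n : ℕ => decide (⌊x * 2 ^ (n + 1)⌋ % 2 = 1))
    (volume.restrict (Set.Ico (0 : ℝ) 1))

/-- The basic clopen set `[σ]` of all `X ∈ 2^ℕ` extending `σ`. -/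
def cyl (σ : BinStr) : Set (ℕ → Bool) := {X | IsInitSeg σ X}

/-- A computably enumerable set of pairs `(n, σ)`. -/
def CEStrSet (W : Set (ℕ × BinStr)) : Prop :=
  ∃ f : ℕ × BinStr →. Unit, Partrec f ∧ ∀ p, p ∈ W ↔ (f p).Dom

/-- `X` is Martin-Löf random: it passes every Martin-Löf test. -/
def MLRandom (X : ℕ → Bool) : Prop :=
  ∀ W : Set (ℕ × BinStr), CEStrSet W →
    (∀ n : ℕ, fairCoin (⋃ σ ∈ {σ | (n, σ) ∈ W}, cyl σ) ≤ 1 / 2 ^ n) →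
    X ∉ ⋂ n : ℕ, ⋃ σ ∈ {σ | (n, σ) ∈ W}, cyl σ

/-- A uniformly computable enumeration of binary trees containing every computable
binary tree. -/
def TreeEnum (T : ℕ → Set BinStr) : Prop :=
  (∃ f : ℕ → BinStr → Bool, Computable₂ f ∧ ∀ e σ, σ ∈ T e ↔ f e σ = true) ∧
  (∀ e, IsTree (T e)) ∧
  (∀ S, IsTree S → ComputableStrSet S → ∃ e, T e = S)

/-- The set `D_{e,0}` of strings forcing `dom Φ(G)` to be bounded. -/
def D0 (F : TuringFunctional) : Set BinStr :=
  {τ | ∃ x : ℕ, ∀ ρ, τ <+: ρ → (F.domStr ρ).encard < (x : ℕ∞)}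

/-- The set `D_{e,1,n}` of strings forcing `dom Φ(G)` to be split by `R n`. -/
def D1 (R : ℕ → Set ℕ) (F : TuringFunctional) (n : ℕ) : Set BinStr :=
  {τ | ∀ ρ, τ <+: ρ → ∀ x : ℕ, ∃ ζ, ρ <+: ζ ∧ ∃ u v, x < u ∧ x < v ∧
    u ∈ F.domStr ζ ∧ v ∈ F.domStr ζ ∧ (u ∈ R n ↔ v ∉ R n)}


namespace Coh

section calcl
variable {α β : Type} [Primcodable α] [Primcodable β]

theorem cp_of_bool {f : α → Bool} (hf : Computable f) : ComputablePred fun a => f a = true :=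
  ComputablePred.computable_iff.2 ⟨f, hf, rfl⟩

theorem cp_comp {p : β → Prop} (hp : ComputablePred p) {g : α → β} (hg : Computable g) :
    ComputablePred fun a => p (g a) := by
  obtain ⟨f, hf, rfl⟩ := ComputablePred.computable_iff.1 hp
  exact cp_of_bool (hf.comp hg)

theorem cp_and {p q : α → Prop} (hp : ComputablePred p) (hq : ComputablePred q) :
    ComputablePred fun a => p a ∧ q a := by
  obtain ⟨f, hf, rfl⟩ := ComputablePred.computable_iff.1 hp
  obtain ⟨g, hg, rfl⟩ := ComputablePred.computable_iff.1 hq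
  exact (cp_of_bool (Primrec.and.to_comp.comp hf hg)).of_eq fun a => by simp

theorem cp_or {p q : α → Prop} (hp : ComputablePred p) (hq : ComputablePred q) :
    ComputablePred fun a => p a ∨ q a := by
  obtain ⟨f, hf, rfl⟩ := ComputablePred.computable_iff.1 hp
  obtain ⟨g, hg, rfl⟩ := ComputablePred.computable_iff.1 hq
  exact (cp_of_bool (Primrec.or.to_comp.comp hf hg)).of_eq fun a => by simp

theorem cp_lt {f g : α → ℕ} (hf : Computable f) (hg : Computable g) :
    ComputablePred fun a => f a < g a :=
  cp_comp (p := fun q : ℕ × ℕ => q.1 < q.2) (PrimrecPred.computablePred Primrec.nat_lt) (hf.pair hg)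

theorem cp_le {f g : α → ℕ} (hf : Computable f) (hg : Computable g) :
    ComputablePred fun a => f a ≤ g a :=
  cp_comp (p := fun q : ℕ × ℕ => q.1 ≤ q.2) (PrimrecPred.computablePred Primrec.nat_le) (hf.pair hg)

theorem cp_eq [DecidableEq β] {f g : α → β} (hf : Computable f) (hg : Computable g) :
    ComputablePred fun a => f a = g a :=
  cp_comp (p := fun q : β × β => q.1 = q.2) (PrimrecPred.computablePred Primrec.eq) (hf.pair hg)

theorem cp_ball {p : α × ℕ → Prop} (hp : ComputablePred p) {n : α → ℕ} (hn : Computable n) :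
    ComputablePred fun a => ∀ x < n a, p (a, x) := by
  obtain ⟨f, hf, rfl⟩ := ComputablePred.computable_iff.1 hp
  have : Computable fun a => Nat.rec (motive := fun _ => Bool) true
      (fun k b => b && f (a, k)) (n a) := by
    refine Computable.nat_rec hn (Computable.const true) (h := fun a q => q.2 && f (a, q.1)) ?_
    exact Primrec.and.to_comp.comp (Computable.snd.comp Computable.snd)
      (hf.comp (Computable.fst.pair (Computable.fst.comp Computable.snd)))
  refine (cp_of_bool this).of_eq fun a => ?_
  induction n a with
  | zero => simp
  | succ k ih => 
    simp only [Bool.and_eq_true, ih]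
    constructor
    · rintro ⟨h1, h2⟩ x hx
      rcases Nat.lt_succ_iff_lt_or_eq.1 hx with h | rfl
      · exact h1 x h
      · exact h2
    · intro h
      exact ⟨fun x hx => h x (by omega), h k (by omega)⟩

theorem cp_bex {p : α × ℕ → Prop} (hp : ComputablePred p) {n : α → ℕ} (hn : Computable n) :
    ComputablePred fun a => ∃ x < n a, p (a, x) :=
  (cp_ball hp.not hn).not.of_eq fun a => by push Not; rfl

/-- computably enumerable predicates -/
def RE (p : α → Prop) : Prop :=
  ∃ q : α × ℕ → Prop, ComputablePred q ∧ ∀ a, p a ↔ ∃ t, q (a, t)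

theorem RE.of_eq {p q : α → Prop} (hp : RE p) (h : ∀ a, p a ↔ q a) : RE q := by
  obtain ⟨r, hr, H⟩ := hp
  exact ⟨r, hr, fun a => (h a).symm.trans (H a)⟩

theorem RE.mono {p : α → Prop} (hp : RE p) : ∃ q : α × ℕ → Prop, ComputablePred q ∧
    (∀ a, p a ↔ ∃ t, q (a, t)) ∧ ∀ a t t', t ≤ t' → q (a, t) → q (a, t') := by
  obtain ⟨q, hq, h⟩ := hp
  refine ⟨fun a => ∃ t' < a.2 + 1, q (a.1, t'), ?_, ?_, ?_⟩
  · exact cp_bex (α := α × ℕ) (p := fun b => q (b.1.1, b.2))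
      (cp_comp hq ((Computable.fst.comp Computable.fst).pair Computable.snd))
      (Computable.succ.comp Computable.snd)
  · intro a
    rw [h]
    exact ⟨fun ⟨t, ht⟩ => ⟨t, t, by simp, ht⟩, fun ⟨_, t, _, ht⟩ => ⟨t, ht⟩⟩
  · rintro a t t' htt ⟨s, hs, hq⟩
    exact ⟨s, by dsimp only at *; omega, hq⟩

theorem re_of_cp {p : α → Prop} (hp : ComputablePred p) : RE p :=
  ⟨fun a => p a.1, cp_comp hp Computable.fst, fun a => by simp⟩

theorem re_comp {p : β → Prop} (hp : RE p) {g : α → β} (hg : Computable g) :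
    RE fun a => p (g a) := by
  obtain ⟨q, hq, h⟩ := hp
  exact ⟨fun a => q (g a.1, a.2), cp_comp hq ((hg.comp Computable.fst).pair Computable.snd),
    fun a => h _⟩

theorem re_and {p q : α → Prop} (hp : RE p) (hq : RE q) : RE fun a => p a ∧ q a := by
  obtain ⟨p', hp', h1, m1⟩ := hp.mono
  obtain ⟨q', hq', h2, m2⟩ := hq.mono
  refine ⟨_, cp_and hp' hq', fun a => ?_⟩
  simp only [h1, h2]
  constructor
  · rintro ⟨⟨t, ht⟩, s, hs⟩
    exact ⟨max t s, m1 _ _ _ (le_max_left _ _) ht, m2 _ _ _ (le_max_right _ _) hs⟩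
  · rintro ⟨t, h, h'⟩
    exact ⟨⟨t, h⟩, t, h'⟩

theorem re_or {p q : α → Prop} (hp : RE p) (hq : RE q) : RE fun a => p a ∨ q a := by
  obtain ⟨p', hp', h1⟩ := hp
  obtain ⟨q', hq', h2⟩ := hq
  refine ⟨_, cp_or hp' hq', fun a => ?_⟩
  simp only [h1, h2, exists_or]

theorem re_ex {p : α × ℕ → Prop} (hp : RE p) : RE fun a => ∃ x, p (a, x) := by
  obtain ⟨q, hq, h⟩ := hp
  refine ⟨fun a => q ((a.1, a.2.unpair.1), a.2.unpair.2), cp_comp hq ?_, fun a => ?_⟩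
  · have := Computable.unpair.comp (Computable.snd (α := α) (β := ℕ))
    exact (Computable.fst.pair (Computable.fst.comp this)).pair (Computable.snd.comp this)
  · simp only [h]
    constructor
    · rintro ⟨x, t, ht⟩
      exact ⟨Nat.pair x t, by simpa using ht⟩
    · rintro ⟨t, ht⟩
      exact ⟨_, _, ht⟩

theorem re_ball {p : α × ℕ → Prop} (hp : RE p) {n : α → ℕ} (hn : Computable n) :
    RE fun a => ∀ x < n a, p (a, x) := by
  obtain ⟨q, hq, h, m⟩ := hp.mono
  refine ⟨fun a => ∀ x < n a.1, q ((a.1, x), a.2), ?_, fun a => ?_⟩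
  · refine cp_ball (α := α × ℕ) (p := fun b => q ((b.1.1, b.2), b.1.2)) (cp_comp hq ?_)
      (hn.comp Computable.fst)
    exact ((Computable.fst.comp Computable.fst).pair Computable.snd).pair
      (Computable.snd.comp Computable.fst)
  · simp only [h]
    constructor
    · intro H
      choose! T hT using H
      refine ⟨(Finset.range (n a)).sup T, fun x hx => m _ _ _ ?_ (hT x hx)⟩
      exact Finset.le_sup (f := T) (Finset.mem_range.2 hx)
    · rintro ⟨t, ht⟩ x hx
      exact ⟨t, ht x hx⟩

open Nat.Partrec in
theorem exists_code {f : α →. β} (hf : Partrec f) : ∃ c : Code, ∀ a,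
    (f a).Dom ↔ ∃ t, (Code.evaln t c (Encodable.encode a)).isSome = true := by
  obtain ⟨c, hc⟩ := Code.exists_code.1 hf
  refine ⟨c, fun a => ?_⟩
  have h1 : (Code.eval c (Encodable.encode a)).Dom ↔ (f a).Dom := by
    rw [hc]; simp
  rw [← h1, Part.dom_iff_mem]
  simp only [Code.evaln_complete, Option.isSome_iff_exists, Option.mem_def]
  exact exists_comm

open Nat.Partrec in
theorem re_dom {f : α →. β} (hf : Partrec f) : RE fun a => (f a).Dom := by
  obtain ⟨c, hc⟩ := exists_code hf
  refine ⟨fun a => (Code.evaln a.2 c (Encodable.encode a.1)).isSome = true, ?_, hc⟩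
  refine cp_of_bool ?_
  refine Primrec.option_isSome.to_comp.comp (Code.primrec_evaln.to_comp.comp
    (g := fun a : α × ℕ => ((a.2, c), Encodable.encode a.1)) ?_)
  exact (Computable.snd.pair (Computable.const c)).pair (Computable.encode.comp Computable.fst)

end calcl

theorem coh_exists (fR : ℕ → ℕ → Bool) (hf : Computable₂ fR) (D : List ℕ → Prop) (hD : RE D)
    (h0 : ¬ D []) (hstep : ∀ l, ¬ D l → ∃ c, ¬ D (l ++ [c]))
    (hinf : ∀ l, ¬ D l → ∀ m, ∃ x > m, ∀ j < l.length, fR j x = (l.getD j 0).bodd) :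
    ∃ C : ℕ → Bool, Computable C ∧ (∀ m, ∃ x > m, C x = true) ∧
      ∀ n, ∃ b, {x | C x = true ∧ fR n x ≠ b}.Finite := by
  classical
  obtain ⟨d, hd, hdD, hm⟩ := hD.mono
  have hex : ∀ a : List ℕ × ℕ, ∃ c, a.2 ≤ c ∨ ¬ d (a.1 ++ [c], a.2) := fun a => ⟨_, Or.inl le_rfl⟩
  have hF : Computable fun a => Nat.find (hex a) := by
    apply Computable.find
    refine cp_or (cp_le (Computable.snd.comp Computable.fst) Computable.snd) ?_
    refine (cp_comp hd (Computable.pair ?_ (Computable.snd.comp Computable.fst))).not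
    exact Computable.list_concat.comp (Computable.fst.comp Computable.fst) Computable.snd
  let g : ℕ → ℕ → List ℕ := fun t k => Nat.rec (motive := fun _ => List ℕ) []
    (fun _ l => l ++ [Nat.find (hex (l, t))]) k
  have hg : Computable fun a : ℕ × ℕ => g a.1 a.2 := by
    refine Computable.nat_rec (f := fun a : ℕ × ℕ => a.2) (g := fun a => [])
      (h := fun a q => q.2 ++ [Nat.find (hex (q.2, a.1))]) Computable.snd (Computable.const []) ?_
    have h2 : Computable fun a : (ℕ × ℕ) × ℕ × List ℕ => a.2.2 :=
      Computable.snd.comp Computable.snd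
    exact Computable.list_concat.comp h2
      (hF.comp (h2.pair (Computable.fst.comp Computable.fst)))
  have g0 : ∀ t, g t 0 = [] := fun t => rfl
  have gs : ∀ t k, g t (k+1) = g t k ++ [Nat.find (hex (g t k, t))] := fun t k => rfl
  clear_value g
  have glen : ∀ t k, (g t k).length = k := by
    intro t k
    induction k with
    | zero => simp [g0]
    | succ k ih => rw [gs]; simp [ih]
  have gpre : ∀ t k k', k ≤ k' → g t k <+: g t k' := by
    intro t k k' h
    induction k', h using Nat.le_induction with
    | base => exact List.prefix_rfl
    | succ k' _ ih => rw [gs]; exact ih.trans (List.prefix_append _ _)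
  have conv : ∀ k, ∃ l T, ¬ D l ∧ ∀ t ≥ T, g t k = l := by
    intro k
    induction k with
    | zero => exact ⟨[], 0, h0, fun t _ => g0 t⟩
    | succ k ih =>
      obtain ⟨l, T, hl, hT⟩ := ih
      have hc := hstep l hl
      refine ⟨l ++ [Nat.find hc], ?_⟩
      have hlt : ∀ c < Nat.find hc, ∃ t, d (l ++ [c], t) := fun c hcc =>
        (hdD _).1 (not_not.1 (Nat.find_min hc hcc))
      choose! S hS using hlt
      refine ⟨max T (max (Nat.find hc + 1) ((Finset.range (Nat.find hc)).sup S)),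
        Nat.find_spec hc, fun t ht => ?_⟩
      simp only [ge_iff_le, max_le_iff] at ht
      rw [gs, hT t ht.1]
      congr 2
      rw [Nat.find_eq_iff]
      refine ⟨Or.inr fun hh => Nat.find_spec hc ((hdD _).2 ⟨_, hh⟩), fun c hcc => ?_⟩
      rintro (h | h)
      · dsimp only at h; omega
      · exact h (hm _ _ _ ((Finset.le_sup (f := S) (Finset.mem_range.2 hcc)).trans ht.2.2)
          (hS c hcc))
  have hex2 : ∀ s, ∃ p : ℕ, s < p.unpair.1 ∧ s ≤ p.unpair.2 ∧
      ∀ j < s, fR j p.unpair.1 = ((g p.unpair.2 s).getD j 0).bodd := by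
    intro s
    obtain ⟨l, T, hl, hT⟩ := conv s
    obtain ⟨x, hx, hx'⟩ := hinf l hl s
    refine ⟨Nat.pair x (max s T), ?_⟩
    have h1 := hT (max s T) (le_max_right _ _)
    have h2 : l.length = s := by rw [← h1, glen]
    simp only [Nat.unpair_pair, h1]
    exact ⟨hx, le_max_left _ _, fun j hj => hx' j (by omega)⟩
  have hH : Computable fun s => Nat.find (hex2 s) := by
    apply Computable.find
    have u1 : Computable fun p : ℕ × ℕ => p.2.unpair.1 :=
      Computable.fst.comp (Computable.unpair.comp Computable.snd)
    have u2 : Computable fun p : ℕ × ℕ => p.2.unpair.2 :=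
      Computable.snd.comp (Computable.unpair.comp Computable.snd)
    refine cp_and (cp_lt Computable.fst u1) (cp_and (cp_le Computable.fst u2) ?_)
    have hg2 : Computable fun a : (ℕ × ℕ) × ℕ => g a.1.2.unpair.2 a.1.1 :=
      hg.comp (g := fun a : (ℕ × ℕ) × ℕ => (a.1.2.unpair.2, a.1.1))
        (Computable.pair (u2.comp Computable.fst) (Computable.fst.comp Computable.fst))
    have hb : Computable fun a : (ℕ × ℕ) × ℕ => ((g a.1.2.unpair.2 a.1.1).getD a.2 0).bodd :=
      Computable.nat_bodd.comp ((Primrec.list_getD 0).to_comp.comp hg2 Computable.snd)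
    have hl : Computable fun a : (ℕ × ℕ) × ℕ => fR a.2 a.1.2.unpair.1 :=
      hf.comp Computable.snd (u1.comp Computable.fst)
    exact cp_ball (α := ℕ × ℕ) (p := fun a => fR a.2 a.1.2.unpair.1 =
      ((g a.1.2.unpair.2 a.1.1).getD a.2 0).bodd) (cp_eq hl hb) Computable.fst
  obtain ⟨H, hHc, hsp⟩ : ∃ H : ℕ → ℕ, Computable H ∧ ∀ s, s < (H s).unpair.1 ∧
      s ≤ (H s).unpair.2 ∧
      ∀ j < s, fR j (H s).unpair.1 = ((g (H s).unpair.2 s).getD j 0).bodd :=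
    ⟨_, hH, fun s => Nat.find_spec (hex2 s)⟩
  have hC : ComputablePred fun x => ∃ s < x, (H s).unpair.1 = x := by
    refine cp_bex (α := ℕ) (p := fun a => (H a.2).unpair.1 = a.1) ?_ Computable.id
    exact cp_eq (Computable.fst.comp (Computable.unpair.comp (hHc.comp Computable.snd)))
      Computable.fst
  obtain ⟨C, hCc, hCe⟩ := ComputablePred.computable_iff.1 hC
  have hCe' : ∀ x, C x = true ↔ ∃ s < x, (H s).unpair.1 = x := fun x =>
    (iff_of_eq (congrFun hCe x)).symm
  refine ⟨C, hCc, fun m => ?_, fun n => ?_⟩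
  · have := (hsp m).1
    exact ⟨_, this, (hCe' _).2 ⟨m, this, rfl⟩⟩
  · obtain ⟨l, T, hl, hT⟩ := conv (n+1)
    refine ⟨(l.getD n 0).bodd, ?_⟩
    refine ((Finset.range (max T (n+1))).image fun s => (H s).unpair.1).finite_toSet.subset ?_
    rintro x ⟨hx, hx'⟩
    obtain ⟨s, hs, rfl⟩ := (hCe' _).1 hx
    simp only [Finset.coe_image, Set.mem_image, Finset.coe_range, Set.mem_Iio]
    refine ⟨s, ?_, rfl⟩
    by_contra hcon
    apply hx'
    obtain ⟨h1, h2, h3⟩ := hsp s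
    rw [h3 n (by omega)]
    have hp := gpre (H s).unpair.2 (n+1) s (by omega)
    rw [hT _ (by omega)] at hp
    obtain ⟨r, hr⟩ := hp
    have hlen : l.length = n+1 := by rw [← hT T le_rfl, glen]
    rw [← hr, List.getD_append _ _ _ _ (by omega)]


def pre (X : ℕ → Bool) (s : ℕ) : List Bool := (List.range s).map X

@[simp] theorem pre_length (X : ℕ → Bool) (s : ℕ) : (pre X s).length = s := by simp [pre]

theorem pre_congr {X Y : ℕ → Bool} {s : ℕ} (h : ∀ i < s, X i = Y i) : pre X s = pre Y s := by
  unfold pre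
  apply List.map_congr_left
  intro i hi
  exact h i (List.mem_range.1 hi)

theorem pre_getD (X : ℕ → Bool) {s i : ℕ} (h : i < s) : (pre X s).getD i false = X i := by
  simp [pre, h]

theorem initSeg_pre (X : ℕ → Bool) (s : ℕ) : IsInitSeg (pre X s) X := by
  intro i hi
  exact pre_getD X (by simpa using hi)

theorem initSeg_iff {σ : BinStr} {X : ℕ → Bool} : IsInitSeg σ X ↔ σ = pre X σ.length := by
  constructor
  · intro h
    apply List.ext_getElem
    · simp
    · intro i h1 h2
      have := h i h1
      rw [List.getD_eq_getElem _ _ h1] at this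
      simp [pre, this]
  · intro h
    rw [h]; exact initSeg_pre _ _

theorem pre_prefix (X : ℕ → Bool) {s t : ℕ} (h : s ≤ t) : pre X s <+: pre X t := by
  obtain ⟨k, rfl⟩ := Nat.exists_eq_add_of_le h
  unfold pre
  rw [List.range_add, List.map_append]
  exact List.prefix_append _ _

theorem domF_iff (F : TuringFunctional) (X : ℕ → Bool) (x : ℕ) :
    x ∈ F.domF X ↔ ∃ s, (F.Φ (pre X s, x)).Dom := by
  constructor
  · rintro ⟨σ, h1, h2⟩
    rw [initSeg_iff] at h1
    exact ⟨_, h1 ▸ h2⟩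
  · rintro ⟨s, h⟩
    exact ⟨_, initSeg_pre X s, h⟩

theorem exists_num (X : ℕ → Bool) (L : ℕ) : ∃ k < 2 ^ L, pre k.testBit L = pre X L :=
  ⟨Nat.ofBits fun i : Fin L => X i, Nat.ofBits_lt_two_pow _, pre_congr fun i hi => by
    simp [Nat.testBit_ofBits_lt _ _ hi]⟩

theorem comp_pow : Computable fun n : ℕ => 2 ^ n := by
  have : Primrec₂ fun a b : ℕ => a ^ b := Primrec₂.unpaired'.1 Nat.Primrec.pow
  exact (this.comp (Primrec.const 2) Primrec.id).to_comp

theorem comp_pre_testBit : Computable fun a : ℕ × ℕ => pre a.1.testBit a.2 := by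
  have hp : Primrec₂ fun a b : ℕ => a ^ b := Primrec₂.unpaired'.1 Nat.Primrec.pow
  refine Primrec.to_comp (Primrec.list_map (Primrec.list_range.comp Primrec.snd) ?_)
  have h1 : Primrec fun q : (ℕ × ℕ) × ℕ => q.1.1 / 2 ^ q.2 % 2 :=
    Primrec.nat_mod.comp (Primrec.nat_div.comp (Primrec.fst.comp Primrec.fst)
      (hp.comp (Primrec.const 2) Primrec.snd)) (Primrec.const 2)
  refine ((Primrec.beq (α := ℕ)).comp h1 (Primrec.const 1)).of_eq fun q => ?_
  dsimp only
  rw [Nat.testBit_eq_decide_div_mod_eq]; rfl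

theorem comp_pre_getD :
    Computable fun a : BinStr × ℕ => pre (fun i => a.1.getD i false) a.2 := by
  refine Primrec.to_comp (Primrec.list_map (Primrec.list_range.comp Primrec.snd) ?_)
  exact (Primrec.list_getD false).comp (Primrec.fst.comp Primrec.fst) Primrec.snd

/-- the closed class avoiding `V` -/
def PV (V : BinStr → Prop) : Set (ℕ → Bool) := {X | ∀ s, ¬ V (pre X s)}

def UpC (V : BinStr → Prop) : Prop := ∀ σ τ, σ <+: τ → V σ → V τ

theorem closed_pre (p : List Bool → Prop) (s : ℕ) : IsClosed {X : ℕ → Bool | p (pre X s)} := by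
  have hc : Continuous fun (X : ℕ → Bool) (i : Fin s) => X i :=
    continuous_pi fun i => continuous_apply _
  have := (isClosed_discrete {l : Fin s → Bool | p (List.ofFn l)}).preimage hc
  convert this using 1
  ext X
  have e : pre X s = List.ofFn fun i : Fin s => X i := by
    apply List.ext_getElem <;> simp [pre]
  simp [e]

theorem closed_PV (V : BinStr → Prop) : IsClosed (PV V) := by
  have : PV V = ⋂ s, {X | ¬ V (pre X s)} := by ext; simp [PV]
  rw [this]
  exact isClosed_iInter fun s => closed_pre (fun l => ¬ V l) s

theorem compact_seq (K : ℕ → Set (ℕ → Bool)) (hc : ∀ n, IsClosed (K n))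
    (ha : ∀ n, K (n+1) ⊆ K n) (hn : ∀ n, (K n).Nonempty) : (⋂ n, K n).Nonempty :=
  IsCompact.nonempty_iInter_of_sequence_nonempty_isCompact_isClosed K ha hn
    (hc 0).isCompact hc

theorem dead_iff {V : BinStr → Prop} (hV : UpC V) :
    (∃ L, ∀ k < 2 ^ L, V (pre (Nat.testBit k) L)) ↔ ¬ (PV V).Nonempty := by
  constructor
  · rintro ⟨L, hL⟩ ⟨X, hX⟩
    obtain ⟨k, hk, he⟩ := exists_num X L
    exact hX L (he ▸ hL k hk)
  · intro h
    by_contra! hcon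
    apply h
    obtain ⟨X, hX⟩ := compact_seq (fun s => {X | ¬ V (pre X s)})
      (fun s => closed_pre (fun l => ¬ V l) s)
      (fun s X hX h' => hX (hV _ _ (pre_prefix X (Nat.le_succ s)) h'))
      (fun s => by obtain ⟨k, _, hk⟩ := hcon s; exact ⟨_, hk⟩)
    exact ⟨X, fun s => Set.mem_iInter.1 hX s⟩

theorem step (R : ℕ → Set ℕ) (hR : ComputableSeq R)
    (hno : ¬ ∃ C : Set ℕ, ComputableSet C ∧ Cohesive R C) (F : TuringFunctional)
    (V : BinStr → Prop) (hV : RE V) (hU : UpC V) (hN : (PV V).Nonempty) :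
    ∃ V', RE V' ∧ UpC V' ∧ (PV V').Nonempty ∧ PV V' ⊆ PV V ∧
      ∀ X ∈ PV V', ¬ Cohesive R (F.domF X) := by
  obtain ⟨fR, hf, hfR⟩ := hR
  by_contra hcon
  have H : ∀ V', RE V' → UpC V' → (PV V').Nonempty → PV V' ⊆ PV V →
      ∃ X ∈ PV V', Cohesive R (F.domF X) := by
    intro V' h1 h2 h3 h4
    by_contra h5
    push Not at h5
    exact hcon ⟨V', h1, h2, h3, h4, h5⟩
  let VL : List ℕ × BinStr → Prop := fun a => V a.2 ∨ ∃ j x, (j < a.1.length ∧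
    (a.1.getD j 0).div2 < x ∧ fR j x ≠ (a.1.getD j 0).bodd) ∧ (F.Φ (a.2, x)).Dom
  have hVL : RE VL := by
    refine re_or (re_comp hV Computable.snd) ?_
    refine re_ex (p := fun b : (List ℕ × BinStr) × ℕ => ∃ x, (b.2 < b.1.1.length ∧
      (b.1.1.getD b.2 0).div2 < x ∧ fR b.2 x ≠ (b.1.1.getD b.2 0).bodd) ∧
        (F.Φ (b.1.2, x)).Dom) ?_
    refine re_ex (p := fun b : ((List ℕ × BinStr) × ℕ) × ℕ => (b.1.2 < b.1.1.1.length ∧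
      (b.1.1.1.getD b.1.2 0).div2 < b.2 ∧ fR b.1.2 b.2 ≠ (b.1.1.1.getD b.1.2 0).bodd) ∧
        (F.Φ (b.1.1.2, b.2)).Dom) ?_
    have hl : Computable fun b : ((List ℕ × BinStr) × ℕ) × ℕ => b.1.1.1 :=
      Computable.fst.comp (Computable.fst.comp Computable.fst)
    have hs : Computable fun b : ((List ℕ × BinStr) × ℕ) × ℕ => b.1.1.2 :=
      Computable.snd.comp (Computable.fst.comp Computable.fst)
    have hj : Computable fun b : ((List ℕ × BinStr) × ℕ) × ℕ => b.1.2 :=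
      Computable.snd.comp Computable.fst
    have hg : Computable fun b : ((List ℕ × BinStr) × ℕ) × ℕ => b.1.1.1.getD b.1.2 0 :=
      (Primrec.list_getD 0).to_comp.comp hl hj
    refine re_and (re_of_cp (cp_and (cp_lt hj (Computable.list_length.comp hl))
      (cp_and (cp_lt (Computable.nat_div2.comp hg) Computable.snd)
        (cp_eq (hf.comp hj Computable.snd) (Computable.nat_bodd.comp hg)).not))) ?_
    exact re_comp (p := fun q : BinStr × ℕ => (F.Φ q).Dom) (re_dom F.partrec)
      (hs.pair Computable.snd)
  have hVLl : ∀ l, RE fun τ => VL (l, τ) := fun l =>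
    re_comp hVL ((Computable.const l).pair Computable.id)
  have hVLu : ∀ l, UpC fun τ => VL (l, τ) := by
    rintro l σ τ hst (h | ⟨j, x, h1, h2⟩)
    · exact Or.inl (hU _ _ hst h)
    · exact Or.inr ⟨j, x, h1, F.mono hst x h2⟩
  have hsub : ∀ l, PV (fun τ => VL (l, τ)) ⊆ PV V := fun l X hX s h => hX s (Or.inl h)
  have mem_iff : ∀ l X, X ∈ PV (fun τ => VL (l, τ)) ↔ X ∈ PV V ∧ ∀ j < l.length,
      ∀ x ∈ F.domF X, (l.getD j 0).div2 < x → fR j x = (l.getD j 0).bodd := by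
    intro l X
    constructor
    · intro h
      refine ⟨hsub l h, fun j hj x hx hlt => ?_⟩
      by_contra hne
      obtain ⟨s, hs⟩ := (domF_iff F X x).1 hx
      exact h s (Or.inr ⟨j, x, ⟨hj, hlt, hne⟩, hs⟩)
    · rintro ⟨h1, h2⟩ s (h | ⟨j, x, ⟨ha, hb, hc⟩, hd⟩)
      · exact h1 s h
      · exact hc (h2 j ha x ((domF_iff F X x).2 ⟨s, hd⟩) hb)
  let D : List ℕ → Prop := fun l => ∃ L, ∀ k < 2 ^ L, VL (l, pre (Nat.testBit k) L)
  have hD : RE D := by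
    refine re_ex (p := fun b : List ℕ × ℕ => ∀ k < 2 ^ b.2, VL (b.1, pre (Nat.testBit k) b.2)) ?_
    refine re_ball (p := fun b : (List ℕ × ℕ) × ℕ => VL (b.1.1, pre (Nat.testBit b.2) b.1.2)) ?_
      (comp_pow.comp Computable.snd)
    refine re_comp hVL ((Computable.fst.comp Computable.fst).pair ?_)
    exact comp_pre_testBit.comp (g := fun b : (List ℕ × ℕ) × ℕ => (b.2, b.1.2))
      (Computable.pair Computable.snd (Computable.snd.comp Computable.fst))
  have hDi : ∀ l, ¬ D l ↔ (PV (fun τ => VL (l, τ))).Nonempty := fun l =>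
    (not_congr (dead_iff (hVLu l))).trans not_not
  have bodd_div2 : ∀ (b : Bool) n, (Nat.bit b n).bodd = b ∧ (Nat.bit b n).div2 = n :=
    fun b n => ⟨Nat.bodd_bit b n, Nat.div2_bit b n⟩
  have h0 : ¬ D [] := by
    rw [hDi]
    obtain ⟨X, hX⟩ := hN
    exact ⟨X, (mem_iff _ _).2 ⟨hX, by simp⟩⟩
  have hstep : ∀ l, ¬ D l → ∃ c, ¬ D (l ++ [c]) := by
    intro l hl
    obtain ⟨X, hX, hco⟩ := H _ (hVLl l) (hVLu l) ((hDi l).1 hl) (hsub l)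
    have : ∃ b, {x | x ∈ F.domF X ∧ fR l.length x ≠ b}.Finite := by
      rcases hco.2 l.length with h | h
      · refine ⟨true, h.subset ?_⟩
        rintro x ⟨h1, h2⟩
        exact ⟨h1, by simpa [hfR] using h2⟩
      · refine ⟨false, h.subset ?_⟩
        rintro x ⟨h1, h2⟩
        exact ⟨h1, by simpa [hfR] using h2⟩
    obtain ⟨b, hb⟩ := this
    obtain ⟨N, hN⟩ := hb.bddAbove
    refine ⟨Nat.bit b N, (hDi _).2 ⟨X, (mem_iff _ _).2 ⟨hsub l hX, fun j hj x hx hlt => ?_⟩⟩⟩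
    rcases lt_or_ge j l.length with hjl | hjl
    · rw [List.getD_append _ _ _ _ hjl] at hlt ⊢
      exact ((mem_iff _ _).1 hX).2 j hjl x hx hlt
    · have : j = l.length := by simp at hj; omega
      subst this
      have e : (l ++ [Nat.bit b N]).getD l.length 0 = Nat.bit b N := by simp
      rw [e] at hlt ⊢
      rw [(bodd_div2 b N).1]
      rw [(bodd_div2 b N).2] at hlt
      by_contra hne
      exact absurd (hN ⟨hx, hne⟩) (not_le.2 hlt)
  have hinf : ∀ l, ¬ D l → ∀ m, ∃ x > m, ∀ j < l.length, fR j x = (l.getD j 0).bodd := by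
    intro l hl m
    obtain ⟨X, hX, hco⟩ := H _ (hVLl l) (hVLu l) ((hDi l).1 hl) (hsub l)
    obtain ⟨x, hx, hlt⟩ := Set.infinite_iff_exists_gt.1 hco.1
      (max m ((Finset.range l.length).sup fun j => (l.getD j 0).div2))
    refine ⟨x, (le_max_left _ _).trans_lt hlt, fun j hj => ?_⟩
    refine ((mem_iff _ _).1 hX).2 j hj x hx (lt_of_le_of_lt ?_ hlt)
    exact (Finset.le_sup (f := fun j => (l.getD j 0).div2) (Finset.mem_range.2 hj)).trans
      (le_max_right _ _)
  obtain ⟨C, hC, hCi, hCc⟩ := coh_exists fR hf D hD h0 hstep hinf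
  · apply hno
    refine ⟨{x | C x = true}, ⟨C, hC, fun n => Iff.rfl⟩, ?_, fun n => ?_⟩
    · rw [Set.infinite_iff_exists_gt]
      intro m
      obtain ⟨x, hx, hx'⟩ := hCi m
      exact ⟨x, hx', hx⟩
    · obtain ⟨b, hb⟩ := hCc n
      cases b
      · right
        refine hb.subset ?_
        rintro x ⟨h1, h2⟩
        refine ⟨h1, ?_⟩
        simpa [hfR] using h2
      · left
        refine hb.subset ?_
        rintro x ⟨h1, h2⟩
        refine ⟨h1, ?_⟩
        simpa [hfR] using h2

open Nat.Partrec in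
theorem force (R : ℕ → Set ℕ) (hR : ComputableSeq R)
    (hno : ¬ ∃ C : Set ℕ, ComputableSet C ∧ Cohesive R C)
    (V : BinStr → Prop) (hV : RE V) (hU : UpC V) (hN : (PV V).Nonempty) :
    ∃ X ∈ PV V, ∀ F : TuringFunctional, ¬ Cohesive R (F.domF X) := by
  let S := {V : BinStr → Prop // RE V ∧ UpC V ∧ (PV V).Nonempty}
  let isc : TuringFunctional → Code → Prop := fun F c => ∀ a,
    (F.Φ a).Dom ↔ ∃ t, (Code.evaln t c (Encodable.encode a)).isSome = true
  have hst : ∀ (n : ℕ) (V : S), ∃ V' : S, PV V'.1 ⊆ PV V.1 ∧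
      ∀ X ∈ PV V'.1, ∀ F, isc F (Denumerable.ofNat Code n) → ¬ Cohesive R (F.domF X) := by
    rintro n ⟨V, h1, h2, h3⟩
    by_cases hF : ∃ F, isc F (Denumerable.ofNat Code n)
    · obtain ⟨F, hF⟩ := hF
      obtain ⟨V', a1, a2, a3, a4, a5⟩ := step R hR hno F V h1 h2 h3
      refine ⟨⟨V', a1, a2, a3⟩, a4, fun X hX G hG => ?_⟩
      have : G.domF X = F.domF X := by
        ext x
        rw [domF_iff, domF_iff]
        exact exists_congr fun s => (hG _).trans (hF _).symm
      rw [this]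
      exact a5 X hX
    · exact ⟨⟨V, h1, h2, h3⟩, subset_rfl, fun X _ F hF' => absurd ⟨F, hF'⟩ hF⟩
  choose nx hnx1 hnx2 using hst
  let sq : ℕ → S := fun n => Nat.rec (motive := fun _ => S) ⟨V, hV, hU, hN⟩ nx n
  obtain ⟨X, hX⟩ := compact_seq (fun n => PV (sq n).1) (fun n => closed_PV _)
    (fun n => hnx1 n (sq n)) (fun n => (sq n).2.2.2)
  rw [Set.mem_iInter] at hX
  refine ⟨X, hX 0, fun F => ?_⟩
  obtain ⟨c, hc⟩ := exists_code F.partrec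
  have := hnx2 (Encodable.encode c) (sq (Encodable.encode c)) X (hX (Encodable.encode c + 1)) F
  rw [Denumerable.ofNat_encode] at this
  exact this hc


noncomputable def dig (x : ℝ) : ℕ → Bool := fun n => decide (⌊x * 2 ^ (n + 1)⌋ % 2 = 1)

theorem meas_dig : Measurable dig := by
  refine measurable_pi_lambda _ fun n => ?_
  have h1 : Measurable fun x : ℝ => ⌊x * 2 ^ (n + 1)⌋ :=
    Int.measurable_floor.comp (measurable_id.mul_const _)
  exact (measurable_from_top (f := fun z : ℤ => decide (z % 2 = 1))).comp h1

theorem dig_iff (σ : BinStr) : ∃ N : ℕ, N < 2 ^ σ.length ∧ ∀ x ∈ Set.Ico (0:ℝ) 1,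
    IsInitSeg σ (dig x) ↔ ⌊x * 2 ^ σ.length⌋ = N := by
  induction σ using List.reverseRecOn with
  | nil =>
    refine ⟨0, by simp, fun x hx => ?_⟩
    have : ⌊x⌋ = 0 := Int.floor_eq_zero_iff.2 hx
    simp [IsInitSeg, this]
  | append_singleton σ b ih =>
    obtain ⟨N, hN, h⟩ := ih
    refine ⟨2 * N + b.toNat, ?_, fun x hx => ?_⟩
    · have := Bool.toNat_le b
      simp only [List.length_append, List.length_singleton, pow_succ]
      omega
    · have h1 : IsInitSeg (σ ++ [b]) (dig x) ↔ IsInitSeg σ (dig x) ∧ b = dig x σ.length := by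
        constructor
        · intro H
          refine ⟨fun i hi => ?_, ?_⟩
          · rw [← H i (by simp; omega), List.getD_append _ _ _ _ hi]
          · rw [← H σ.length (by simp)]; simp
        · rintro ⟨h1, h2⟩ i hi
          rcases lt_or_ge i σ.length with hl | hl
          · rw [List.getD_append _ _ _ _ hl]; exact h1 i hl
          · have : i = σ.length := by simp at hi; omega
            subst this; simp [← h2]
      rw [h1, h x hx]
      have e1 : ⌊x * 2 ^ σ.length⌋ = ⌊x * 2 ^ (σ.length + 1)⌋ / 2 := by
        have := Int.floor_div_natCast (x * 2 ^ (σ.length + 1)) 2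
        rw [← Nat.cast_two (R := ℤ), ← this]
        congr 1
        push_cast
        rw [pow_succ]; ring
      rw [e1]
      simp only [dig, List.length_append, List.length_singleton]
      generalize ⌊x * 2 ^ (σ.length + 1)⌋ = z
      cases b <;> simp <;> omega

theorem fairCoin_cyl (σ : BinStr) : fairCoin (cyl σ) = (2 ^ σ.length)⁻¹ := by
  have hm : MeasurableSet (cyl σ) := by
    have : cyl σ = {X | pre X σ.length = σ} := by
      ext X; simp only [cyl, Set.mem_ofPred_eq, initSeg_iff]; exact eq_comm
    rw [this]
    exact (closed_pre (fun l => l = σ) σ.length).measurableSet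
  change (Measure.map dig (volume.restrict (Set.Ico (0:ℝ) 1))) (cyl σ) = _
  rw [Measure.map_apply meas_dig hm, Measure.restrict_apply (meas_dig hm)]
  obtain ⟨N, hN, h⟩ := dig_iff σ
  have hp : (0:ℝ) < 2 ^ σ.length := by positivity
  have : dig ⁻¹' cyl σ ∩ Set.Ico (0:ℝ) 1 =
      Set.Ico ((N:ℝ) / 2 ^ σ.length) (((N:ℝ) + 1) / 2 ^ σ.length) := by
    ext x
    simp only [Set.mem_inter_iff, Set.mem_preimage, cyl, Set.mem_ofPred_eq, Set.mem_Ico]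
    have hN' : (N:ℝ) + 1 ≤ 2 ^ σ.length := by exact_mod_cast hN
    rw [div_le_iff₀ hp, lt_div_iff₀ hp]
    constructor
    · rintro ⟨h1, h2⟩
      have := (h x h2).1 h1
      rw [Int.floor_eq_iff] at this
      simpa using this
    · rintro ⟨h1, h2⟩
      have hx : x ∈ Set.Ico (0:ℝ) 1 := by
        constructor
        · by_contra hneg
          push Not at hneg
          have : (0:ℝ) ≤ N := Nat.cast_nonneg N
          nlinarith
        · by_contra hge
          push Not at hge
          nlinarith
      refine ⟨(h x hx).2 ?_, hx⟩
      rw [Int.floor_eq_iff]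
      simpa using ⟨h1, h2⟩
  rw [this, Real.volume_Ico]
  have : ((N:ℝ) + 1) / 2 ^ σ.length - N / 2 ^ σ.length = (2 ^ σ.length)⁻¹ := by
    field_simp; ring
  rw [this, ENNReal.ofReal_inv_of_pos hp, ENNReal.ofReal_pow (by norm_num)]
  simp

theorem fairCoin_univ : fairCoin Set.univ = 1 := by
  have := fairCoin_cyl []
  have e : cyl [] = Set.univ := by ext; simp [cyl, IsInitSeg]
  simpa [e] using this

open Classical in
theorem fairCoin_pre (Q : List Bool → Prop) (s : ℕ) :
    fairCoin {X | Q (pre X s)} =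
      (((Finset.range (2 ^ s)).filter fun j => Q (pre (Nat.testBit j) s)).card : ENNReal)
        * (2 ^ s)⁻¹ := by
  have e : {X | Q (pre X s)} =
      ⋃ j ∈ (Finset.range (2 ^ s)).filter fun j => Q (pre (Nat.testBit j) s),
        cyl (pre (Nat.testBit j) s) := by
    ext X
    simp only [Set.mem_ofPred_eq, Set.mem_iUnion, Finset.mem_filter, Finset.mem_range, cyl,
      initSeg_iff, pre_length, exists_prop]
    constructor
    · intro h
      obtain ⟨k, hk, he⟩ := exists_num X s
      exact ⟨k, ⟨hk, he ▸ h⟩, he⟩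
    · rintro ⟨k, ⟨hk, h⟩, he⟩
      exact he ▸ h
  rw [e, measure_biUnion_finset]
  · simp [fairCoin_cyl]
  · intro j hj k hk hne
    simp only [Finset.coe_filter, Finset.mem_range, Set.mem_ofPred_eq] at hj hk
    refine Set.disjoint_left.2 fun X h1 h2 => hne ?_
    apply Nat.eq_of_testBit_eq
    intro i
    rcases lt_or_ge i s with hi | hi
    · have a1 := h1 i (by simpa using hi)
      have a2 := h2 i (by simpa using hi)
      rw [pre_getD _ hi] at a1 a2
      rw [a1, a2]
    · have hle : 2 ^ s ≤ 2 ^ i := Nat.pow_le_pow_right (by norm_num) hi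
      rw [Nat.testBit_eq_false_of_lt (hj.1.trans_le hle),
        Nat.testBit_eq_false_of_lt (hk.1.trans_le hle)]
  · intro j _
    have : cyl (pre (Nat.testBit j) s) = {X | pre X s = pre (Nat.testBit j) s} := by
      ext X; simp only [cyl, Set.mem_ofPred_eq, initSeg_iff, pre_length]; exact eq_comm
    rw [this]
    exact (closed_pre (fun l => l = pre (Nat.testBit j) s) s).measurableSet

open Classical in
theorem comp_card {α : Type} [Primcodable α] {p : α × ℕ → Prop} (hp : ComputablePred p)
    {n : α → ℕ} (hn : Computable n) :
    Computable fun a => ((Finset.range (n a)).filter fun j => p (a, j)).card := by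
  obtain ⟨f, hf, rfl⟩ := ComputablePred.computable_iff.1 hp
  have : Computable fun a => Nat.rec (motive := fun _ => ℕ) 0
      (fun k c => c + cond (f (a, k)) 1 0) (n a) := by
    refine Computable.nat_rec hn (Computable.const 0)
      (h := fun a q => q.2 + cond (f (a, q.1)) 1 0) ?_
    refine Primrec.nat_add.to_comp.comp (Computable.snd.comp Computable.snd) ?_
    exact Computable.cond
      (hf.comp (Computable.fst.pair (Computable.fst.comp Computable.snd)))
      (Computable.const 1) (Computable.const 0)
  refine this.of_eq fun a => ?_
  induction n a with
  | zero => simp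
  | succ k ih =>
    simp only [ih]
    rw [Finset.range_add_one, Finset.filter_insert]
    cases hfk : f (a, k) <;> simp

open Nat.Partrec

def AA (e : ℕ) (τ : BinStr) : Prop := ∃ i < τ.length + 1,
  (Code.evaln τ.length (Denumerable.ofNat Code e)
    (Encodable.encode (e + 2, pre (fun j => τ.getD j false) i))).isSome = true

open Classical in
noncomputable def cnt (e s : ℕ) : ℕ :=
  ((Finset.range (2 ^ s)).filter fun j => AA e (pre (Nat.testBit j) s)).card

def UV (τ : BinStr) : Prop :=
  ∃ e, AA e τ ∧ cnt e τ.length * 2 ^ (e + 2) ≤ 2 ^ τ.length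

theorem cp_AA : ComputablePred fun a : ℕ × BinStr => AA a.1 a.2 := by
  refine cp_bex (α := ℕ × BinStr) (p := fun b : (ℕ × BinStr) × ℕ =>
    (Code.evaln b.1.2.length (Denumerable.ofNat Code b.1.1)
    (Encodable.encode (b.1.1 + 2, pre (fun j => b.1.2.getD j false) b.2))).isSome = true) ?_
    (Computable.succ.comp (Computable.list_length.comp Computable.snd))
  refine cp_of_bool ?_
  have he : Computable fun b : (ℕ × BinStr) × ℕ => b.1.1 := Computable.fst.comp Computable.fst
  have ht : Computable fun b : (ℕ × BinStr) × ℕ => b.1.2 := Computable.snd.comp Computable.fst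
  have hp : Computable fun b : (ℕ × BinStr) × ℕ => pre (fun j => b.1.2.getD j false) b.2 :=
    comp_pre_getD.comp (g := fun b : (ℕ × BinStr) × ℕ => (b.1.2, b.2))
      (Computable.pair ht Computable.snd)
  refine Primrec.option_isSome.to_comp.comp (Code.primrec_evaln.to_comp.comp
    (g := fun b : (ℕ × BinStr) × ℕ => ((b.1.2.length, Denumerable.ofNat Code b.1.1),
      Encodable.encode (b.1.1 + 2, pre (fun j => b.1.2.getD j false) b.2))) ?_)
  refine Computable.pair (Computable.pair (Computable.list_length.comp ht)
    ((Computable.ofNat Code).comp he)) (Computable.encode.comp (Computable.pair ?_ hp))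
  exact Computable.succ.comp (Computable.succ.comp he)

theorem re_UV : RE UV := by
  refine re_ex (p := fun b : BinStr × ℕ => AA b.2 b.1 ∧
    cnt b.2 b.1.length * 2 ^ (b.2 + 2) ≤ 2 ^ b.1.length) (re_of_cp ?_)
  have hl : Computable fun b : BinStr × ℕ => b.1.length :=
    Computable.list_length.comp Computable.fst
  refine cp_and (cp_comp (p := fun a : ℕ × BinStr => AA a.1 a.2) cp_AA
    (Computable.snd.pair Computable.fst)) (cp_le (Primrec.nat_mul.to_comp.comp ?_
      (comp_pow.comp (Computable.succ.comp (Computable.succ.comp Computable.snd))))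
      (comp_pow.comp hl))
  refine comp_card (α := BinStr × ℕ)
    (p := fun b => AA b.1.2 (pre (Nat.testBit b.2) b.1.1.length)) ?_ (comp_pow.comp hl)
  refine cp_comp (p := fun a : ℕ × BinStr => AA a.1 a.2) cp_AA
    (g := fun b : (BinStr × ℕ) × ℕ => (b.1.2, pre (Nat.testBit b.2) b.1.1.length)) ?_
  refine Computable.pair (Computable.snd.comp Computable.fst) ?_
  exact comp_pre_testBit.comp (g := fun b : (BinStr × ℕ) × ℕ => (b.2, b.1.1.length))
    (Computable.pair Computable.snd (hl.comp Computable.fst))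

theorem pre_pre (X : ℕ → Bool) {i s : ℕ} (h : i ≤ s) :
    pre (fun j => (pre X s).getD j false) i = pre X i :=
  pre_congr fun j hj => pre_getD X (hj.trans_le h)

theorem AA_pre (e : ℕ) (X : ℕ → Bool) (s : ℕ) : AA e (pre X s) ↔ ∃ i ≤ s,
    (Code.evaln s (Denumerable.ofNat Code e) (Encodable.encode (e + 2, pre X i))).isSome = true := by
  unfold AA
  simp only [pre_length, Nat.lt_succ_iff]
  exact exists_congr fun i => and_congr_right fun hi => by rw [pre_pre X hi]

theorem evaln_isSome_mono {c : Code} {s t n : ℕ} (h : s ≤ t)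
    (hs : (Code.evaln s c n).isSome = true) : (Code.evaln t c n).isSome = true := by
  obtain ⟨x, hx⟩ := Option.isSome_iff_exists.1 hs
  exact Option.isSome_iff_exists.2 ⟨x, Code.evaln_mono h hx⟩

theorem Op_mono (e : ℕ) {s t : ℕ} (h : s ≤ t) :
    {X : ℕ → Bool | AA e (pre X s)} ⊆ {X | AA e (pre X t)} := by
  intro X hX
  rw [Set.mem_ofPred_eq, AA_pre] at hX ⊢
  obtain ⟨i, hi, hs⟩ := hX
  exact ⟨i, hi.trans h, evaln_isSome_mono h hs⟩

theorem good_iff (e s : ℕ) : cnt e s * 2 ^ (e + 2) ≤ 2 ^ s ↔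
    fairCoin {X | AA e (pre X s)} ≤ (2 ^ (e + 2))⁻¹ := by
  rw [fairCoin_pre (AA e) s]
  change _ ↔ (cnt e s : ENNReal) * _ ≤ _
  rw [← div_eq_mul_inv, ENNReal.div_le_iff (by simp) (by simp), mul_comm (_⁻¹),
    ← div_eq_mul_inv, ENNReal.le_div_iff_mul_le (by simp) (by simp)]
  exact_mod_cast Iff.rfl

theorem PV_UV_nonempty : (PV UV).Nonempty := by
  by_contra hne
  rw [Set.not_nonempty_iff_eq_empty] at hne
  have hcov : (Set.univ : Set (ℕ → Bool)) ⊆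
      ⋃ e, ⋃ s : {s // cnt e s * 2 ^ (e + 2) ≤ 2 ^ s}, {X | AA e (pre X s.1)} := by
    intro X _
    have : X ∉ PV UV := by rw [hne]; simp
    simp only [PV, Set.mem_ofPred_eq, not_forall, not_not] at this
    obtain ⟨s, e, h1, h2⟩ := this
    rw [pre_length] at h2
    exact Set.mem_iUnion.2 ⟨e, Set.mem_iUnion.2 ⟨⟨s, h2⟩, h1⟩⟩
  have h1 : fairCoin Set.univ ≤ ∑' e : ℕ, (2 ^ (e + 2) : ENNReal)⁻¹ := by
    refine (measure_mono hcov).trans ((measure_iUnion_le _).trans (ENNReal.tsum_le_tsum fun e => ?_))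
    rw [Directed.measure_iUnion]
    · exact iSup_le fun s => (good_iff e s.1).1 s.2
    · intro a b
      rcases le_total a.1 b.1 with h | h
      · exact ⟨b, Op_mono e h, subset_rfl⟩
      · exact ⟨a, subset_rfl, Op_mono e h⟩
  have h2 : ∑' e : ℕ, (2 ^ (e + 2) : ENNReal)⁻¹ = 2⁻¹ := by
    have : ∀ e : ℕ, (2 ^ (e + 2) : ENNReal)⁻¹ = 2⁻¹ ^ (e + 1) * 2⁻¹ := by
      intro e; rw [← ENNReal.inv_pow.symm, ← pow_succ]
    simp only [this]
    rw [ENNReal.tsum_mul_right, ENNReal.tsum_geometric_add_one, ENNReal.one_sub_inv_two, inv_inv,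
      ENNReal.inv_mul_cancel (by norm_num) (by norm_num), one_mul]
  rw [h2, fairCoin_univ] at h1
  exact absurd h1 (not_le.2 (by norm_num))

theorem MLR_of_PV {X : ℕ → Bool} (hX : X ∈ PV UV) : MLRandom X := by
  rintro W ⟨f, hf, hW⟩ hm hmem
  obtain ⟨c, hc⟩ := exists_code hf
  set e := Encodable.encode c with he
  have hce : Denumerable.ofNat Code e = c := Denumerable.ofNat_encode c
  have hWe : ∀ p, p ∈ W ↔ ∃ t, (Code.evaln t c (Encodable.encode p)).isSome = true :=
    fun p => (hW p).trans (hc p)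
  have h1 := Set.mem_iInter.1 hmem (e + 2)
  simp only [Set.mem_iUnion, Set.mem_ofPred_eq, exists_prop] at h1
  obtain ⟨σ, hσ, hσX⟩ := h1
  obtain ⟨t, ht⟩ := (hWe _).1 hσ
  have hσ' : σ = pre X σ.length := initSeg_iff.1 hσX
  apply hX (max t σ.length)
  refine ⟨e, ?_, ?_⟩
  · rw [AA_pre]
    refine ⟨σ.length, le_max_right _ _, ?_⟩
    rw [← hσ', hce]
    exact evaln_isSome_mono (le_max_left _ _) ht
  · rw [pre_length, good_iff]
    refine le_trans (measure_mono ?_) ((hm (e + 2)).trans (by simp))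
    intro Y hY
    rw [Set.mem_ofPred_eq, AA_pre] at hY
    obtain ⟨i, _, hi⟩ := hY
    rw [hce] at hi
    simp only [Set.mem_iUnion, Set.mem_ofPred_eq, exists_prop]
    exact ⟨pre Y i, (hWe _).2 ⟨_, hi⟩, initSeg_pre Y i⟩

def upV (V : BinStr → Prop) (τ : BinStr) : Prop :=
  ∃ i, i ≤ τ.length ∧ V (pre (fun j => τ.getD j false) i)

theorem re_upV {V : BinStr → Prop} (hV : RE V) : RE (upV V) := by
  refine re_ex (p := fun b : BinStr × ℕ => b.2 ≤ b.1.length ∧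
    V (pre (fun j => b.1.getD j false) b.2)) (re_and (re_of_cp ?_) (re_comp hV comp_pre_getD))
  exact cp_le Computable.snd (Computable.list_length.comp Computable.fst)

theorem upC_upV (V : BinStr → Prop) : UpC (upV V) := by
  rintro σ τ ⟨r, rfl⟩ ⟨i, hi, h⟩
  refine ⟨i, by simp; omega, ?_⟩
  have : pre (fun j => (σ ++ r).getD j false) i = pre (fun j => σ.getD j false) i :=
    pre_congr fun j hj => List.getD_append _ _ _ _ (by omega)
  rwa [this]

theorem PV_upV (V : BinStr → Prop) : PV (upV V) = PV V := by
  ext X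
  constructor
  · intro h s hs
    exact h s ⟨s, by simp, by rwa [pre_pre X le_rfl]⟩
  · rintro h s ⟨i, hi, hV⟩
    rw [pre_length] at hi
    rw [pre_pre X hi] at hV
    exact h i hV

end Coh

/-- **Theorem (Wang, Theorem 3.1).** If `R` is a computable sequence admitting no
computable `R`-cohesive set, then there is a Martin-Löf random `X` such that for
every use-monotone Turing functional `Φ`, `dom Φ(X)` is not `R`-cohesive. -/
theorem exists_MLRandom_domF_not_cohesive
    (R : ℕ → Set ℕ) (hR : ComputableSeq R)
    (hno : ¬ ∃ C : Set ℕ, ComputableSet C ∧ Cohesive R C) :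
    ∃ X : ℕ → Bool, MLRandom X ∧
      ∀ F : TuringFunctional, ¬ Cohesive R (F.domF X) := by
  obtain ⟨X, hX, h⟩ := Coh.force R hR hno (Coh.upV Coh.UV) (Coh.re_upV Coh.re_UV)
    (Coh.upC_upV _) (by rw [Coh.PV_upV]; exact Coh.PV_UV_nonempty)
  rw [Coh.PV_upV] at hX
  exact ⟨X, Coh.MLR_of_PV hX, h⟩
end

section
/- Let R = (R_n : n ∈ ℕ) be a computable sequence of subsets of ℕ that admits no computable R-cohesive set. Then there exists a non-computable X ∈ 2^ℕ (i.e., the set {n : X(n) = 1} is not computable) such that no set C ⊆ ℕ with C ≤_T X is R-cohesive. -/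
open MeasureTheory

theorem aux_stage {α : Type} [Primcodable α] {g : α →. Bool} (hg : Partrec g) :
    ∃ E : α → ℕ → Bool, Primrec₂ E ∧ ∀ a, true ∈ g a ↔ ∃ k, E a k = true := by
  obtain ⟨c, hc⟩ := Nat.Partrec.Code.exists_code.1 hg
  refine ⟨fun a k => decide (Nat.Partrec.Code.evaln k c (Encodable.encode a)
    = some (Encodable.encode true)), ?_, ?_⟩
  · have h1 : Primrec fun q : α × ℕ => Nat.Partrec.Code.evaln q.2 c (Encodable.encode q.1) :=
      Nat.Partrec.Code.primrec_evaln.comp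
        ((Primrec.snd.pair (Primrec.const c)).pair (Primrec.encode.comp Primrec.fst))
    exact (Primrec.eq.comp h1 (Primrec.const (some (Encodable.encode true)))).decide
  · intro a
    have h2 : Encodable.encode true ∈ c.eval (Encodable.encode a) ↔ true ∈ g a := by
      rw [hc]
      simp [Part.mem_map_iff]
    rw [← h2, Nat.Partrec.Code.evaln_complete]
    simp only [Option.mem_def, decide_eq_true_eq]

theorem aux_dec (α : Type) [Primcodable α] [Inhabited α] :
    ∃ d : ℕ → α, Primrec d ∧ Function.Surjective d := by
  refine ⟨fun n => (Encodable.decode n).getD default, ?_, ?_⟩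
  · exact Primrec.option_getD.comp Primrec.decode (Primrec.const default)
  · intro a
    exact ⟨Encodable.encode a, by simp⟩

theorem aux_countable {α β : Type} [Primcodable α] [Primcodable β] :
    Countable {f : α →. β // Partrec f} := by
  let F : {f : α →. β // Partrec f} → {f : ℕ →. ℕ // Partrec f} := fun f =>
    ⟨fun n => Part.bind (Part.ofOption (Encodable.decode (α := α) n)) fun a => (f.1 a).map Encodable.encode,
      Partrec.nat_iff.2 (show Nat.Partrec _ from f.2)⟩
  refine Function.Injective.countable (f := F) ?_
  intro f g h
  apply Subtype.ext
  funext a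
  have h1 := congrFun (congrArg Subtype.val h) (Encodable.encode a)
  simp only [F, Encodable.encodek, Part.coe_some, Part.bind_some] at h1
  ext b
  have h2 : Encodable.encode b ∈ (f.1 a).map Encodable.encode
    ↔ Encodable.encode b ∈ (g.1 a).map Encodable.encode := by rw [h1]
  simpa [Part.mem_map_iff] using h2

theorem aux_prefix {σ τ : List Bool} {X : ℕ → Bool} (h1 : IsInitSeg σ X) (h2 : IsInitSeg τ X)
    (h : σ.length ≤ τ.length) : σ <+: τ := by
  rw [List.prefix_iff_eq_take]
  apply List.ext_getElem
  · simp [h]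
  · intro i hi hi2
    have a := h1 i hi
    have b := h2 i (by omega)
    rw [List.getD_eq_getElem _ _ hi] at a
    rw [List.getD_eq_getElem _ _ (by omega)] at b
    simp [a, b]

theorem aux_generic {ι : Type} [Countable ι] (D : ι → Set (List Bool))
    (hD : ∀ i σ, ∃ τ, σ <+: τ ∧ τ ∈ D i) :
    ∃ X : ℕ → Bool, ∀ i, ∃ σ, IsInitSeg σ X ∧ σ ∈ D i := by
  cases isEmpty_or_nonempty ι with
  | inl h => exact ⟨fun _ => false, fun i => (h.false i).elim⟩
  | inr h =>
  obtain ⟨φ, hφ⟩ := exists_surjective_nat ι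
  choose ext he hd using hD
  let S : ℕ → List Bool := fun n => Nat.rec [] (fun n σ => ext (φ n) (σ ++ [false])) n
  have hS : ∀ n, S (n+1) = ext (φ n) (S n ++ [false]) := fun n => rfl
  have hpre1 : ∀ n, S n ++ [false] <+: S (n+1) := fun n => by rw [hS]; exact he _ _
  have hpre : ∀ m n, m ≤ n → S m <+: S n := by
    intro m n hmn
    induction hmn with
    | refl => exact List.prefix_refl _
    | step _ ih => exact ih.trans ((List.prefix_append _ _).trans (hpre1 _))
  have hlen : ∀ n, n ≤ (S n).length := by
    intro n
    induction n with
    | zero => simp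
    | succ n ih => have := (hpre1 n).length_le; simp at this; omega
  refine ⟨fun i => (S (i+1)).getD i false, fun i => ?_⟩
  obtain ⟨n, rfl⟩ := hφ i
  refine ⟨S (n+1), fun j hj => ?_, hd _ _⟩
  have hj2 : j < (S (j+1)).length := hlen (j+1)
  show (S (n+1)).getD j false = (S (j+1)).getD j false
  rw [List.getD_eq_getElem _ _ hj, List.getD_eq_getElem _ _ hj2]
  rcases le_total (n+1) (j+1) with h | h
  · exact (hpre _ _ h).getElem hj
  · exact ((hpre _ _ h).getElem hj2).symm

theorem aux_limit (σ : List Bool) (Q : ((ℕ × List Bool) × ℕ) → ℕ → Bool) (hQ : Primrec₂ Q)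
    (A : ℕ → List Bool) (hA : Primrec A)
    (H : ∀ n τ, σ <+: τ → ∃ c, ∀ w, Q ((n, τ), c) w = false) :
    ∃ h : ℕ → List Bool, Computable h ∧ (∀ s, σ <+: h s) ∧
      ∀ n, ∃ τ c s0, (∀ w, Q ((n, τ), c) w = false) ∧ ∀ s, s0 ≤ s → τ ++ A c <+: h s := by
  let P : (ℕ × (ℕ × List Bool)) → ℕ → Bool := fun q c =>
    decide ((List.range q.1).findIdx (Q (q.2, c)) = q.1)
  have hP : Primrec₂ P := by
    have h1 : Primrec fun z : (ℕ × (ℕ × List Bool)) × ℕ =>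
        (List.range z.1.1).findIdx (Q (z.1.2, z.2)) :=
      Primrec.list_findIdx (Primrec.list_range.comp (Primrec.fst.comp Primrec.fst))
        (p := fun z w => Q (z.1.2, z.2) w)
        (hQ.comp (((Primrec.snd.comp Primrec.fst).pair Primrec.snd).comp Primrec.fst)
          Primrec.snd)
    exact (Primrec.eq.comp h1 (Primrec.fst.comp Primrec.fst)).decide
  have hP' : ∀ s n τ c, P (s, n, τ) c = true ↔ ∀ w < s, Q ((n, τ), c) w = false := by
    intro s n τ c
    have := List.findIdx_eq_length (p := Q ((n, τ), c)) (xs := List.range s)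
    simp only [List.length_range, List.mem_range] at this
    simp [P, this]
  let G : ℕ → ℕ × List Bool → List Bool := fun s q =>
    q.2 ++ A ((List.range s).findIdx (P (s, q)))
  have hG : Primrec₂ G := by
    have h1 : Primrec fun z : ℕ × (ℕ × List Bool) => (List.range z.1).findIdx (P z) :=
      Primrec.list_findIdx (Primrec.list_range.comp Primrec.fst) hP
    exact Primrec.list_append.comp (Primrec.snd.comp Primrec.snd) (hA.comp h1)
  let g : ℕ → ℕ → List Bool := fun s n => Nat.rec σ (fun n τ => G s (n, τ)) n
  have hg : Primrec₂ g := Primrec.nat_rec (Primrec.const σ) hG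
  have gs : ∀ s n, g s (n+1) = g s n ++ A ((List.range s).findIdx (P (s, n, g s n))) :=
    fun s n => rfl
  have gp : ∀ s m n, m ≤ n → g s m <+: g s n := by
    intro s m n hmn
    induction hmn with
    | refl => exact List.prefix_refl _
    | step _ ih => exact ih.trans (by rw [gs]; exact List.prefix_append _ _)
  have gσ : ∀ s n, σ <+: g s n := fun s n => gp s 0 n (Nat.zero_le _)
  have key : ∀ n τ s0, (∀ s, s0 ≤ s → g s n = τ) → ∃ c s1, (∀ w, Q ((n, τ), c) w = false) ∧
      ∀ s, s1 ≤ s → g s (n+1) = τ ++ A c := by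
    intro n τ s0 h0
    have hτ : σ <+: τ := by rw [← h0 s0 le_rfl]; exact gσ _ _
    have hex := H n τ hτ
    classical
    let c := Nat.find hex
    have hc : ∀ w, Q ((n, τ), c) w = false := Nat.find_spec hex
    have hlt : ∀ j, ∃ w, j < c → Q ((n, τ), j) w = true := by
      intro j
      by_cases hj : j < c
      · have := Nat.find_min hex hj
        push Not at this
        obtain ⟨w, hw⟩ := this
        exact ⟨w, fun _ => by simpa using hw⟩
      · exact ⟨0, fun h => (hj h).elim⟩
    choose t ht using hlt
    refine ⟨c, s0 + c + 1 + ∑ j ∈ Finset.range c, (t j + 1), hc, fun s hs => ?_⟩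
    rw [gs, h0 s (by omega)]
    congr 2
    have hcs : c < (List.range s).length := by simp; omega
    rw [List.findIdx_eq hcs]
    constructor
    · simp only [List.getElem_range]
      rw [hP']
      exact fun w _ => hc w
    · intro j hj
      simp only [List.getElem_range]
      rw [← Bool.not_eq_true, hP']
      intro hh
      have h1 := Finset.single_le_sum (f := fun j => t j + 1) (fun i _ => Nat.zero_le _)
        (Finset.mem_range.2 hj)
      have h2 := hh (t j) (by omega)
      rw [ht j hj] at h2
      simp at h2
  have lim : ∀ n, ∃ τ s0, ∀ s, s0 ≤ s → g s n = τ := by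
    intro n
    induction n with
    | zero => exact ⟨σ, 0, fun _ _ => rfl⟩
    | succ n ih =>
      obtain ⟨τ, s0, h0⟩ := ih
      obtain ⟨c, s1, _, h1⟩ := key n τ s0 h0
      exact ⟨_, s1, h1⟩
  refine ⟨fun s => g s s, (hg.comp Primrec.id Primrec.id).to_comp, fun s => gσ s s, fun n => ?_⟩
  obtain ⟨τ, s0, h0⟩ := lim n
  obtain ⟨c, s1, hc, h1⟩ := key n τ s0 h0
  refine ⟨τ, c, s1 + n + 1, hc, fun s hs => ?_⟩
  rw [← h1 s (by omega)]
  exact gp s (n+1) s (by omega)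

theorem aux_range (e : ℕ → ℕ) (he : Computable e) (hm : StrictMono e) :
    ComputableSet (Set.range e) := by
  let B : ℕ → ℕ → Bool := fun x n => Nat.rec false (fun i b => b || decide (e i = x)) n
  have hB : Computable₂ B := by
    refine Computable.nat_rec (f := fun q : ℕ × ℕ => q.2) (g := fun _ => false)
      (h := fun q r => r.2 || decide (e r.1 = q.1)) Computable.snd (Computable.const false) ?_
    have h1 : Computable fun z : (ℕ × ℕ) × (ℕ × Bool) => decide (e z.2.1 = z.1.1) :=
      (Primrec.eq.decide.to_comp).comp (he.comp (Computable.fst.comp Computable.snd))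
        (Computable.fst.comp Computable.fst)
    exact Primrec.or.to_comp.comp (Computable.snd.comp Computable.snd) h1
  have hB' : ∀ x n, B x n = true ↔ ∃ i < n, e i = x := by
    intro x n
    induction n with
    | zero => simp [B]
    | succ n ih =>
      have : B x (n+1) = (B x n || decide (e n = x)) := rfl
      rw [this]
      simp only [Bool.or_eq_true, ih, decide_eq_true_eq, Nat.lt_succ_iff_lt_or_eq, or_and_right,
        exists_or, exists_eq_left]
  refine ⟨fun x => B x (x+1), hB.comp Computable.id Computable.succ, fun x => ?_⟩
  refine Iff.trans ?_ (hB' x (x+1)).symm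
  constructor
  · rintro ⟨i, rfl⟩
    exact ⟨i, Nat.lt_succ_of_le (hm.id_le i), rfl⟩
  · rintro ⟨i, _, h⟩
    exact ⟨i, h⟩

theorem aux_enum (Ψ : List Bool × ℕ →. Bool) (hΨ : Partrec Ψ) (h : ℕ → List Bool)
    (hh : Computable h) (H : ∀ s m, ∃ β u, m < u ∧ true ∈ Ψ (h s ++ β, u)) :
    ∃ e : ℕ → ℕ, Computable e ∧ StrictMono e ∧ ∀ s, ∃ β, true ∈ Ψ (h s ++ β, e (s+1)) := by
  obtain ⟨E, hE, hE'⟩ := aux_stage hΨ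
  obtain ⟨d, hd, hds⟩ := aux_dec (List Bool × ℕ × ℕ)
  let T : ℕ × ℕ → ℕ → Option ℕ := fun q w =>
    bif (decide (q.2 < (d w).2.1) && E (h q.1 ++ (d w).1, (d w).2.1) (d w).2.2)
      then some (d w).2.1 else none
  have hT : Computable₂ T := by
    have hdw : Computable fun z : (ℕ × ℕ) × ℕ => d z.2 := hd.to_comp.comp Computable.snd
    have hu : Computable fun z : (ℕ × ℕ) × ℕ => (d z.2).2.1 :=
      Computable.fst.comp (Computable.snd.comp hdw)
    have hb : Computable fun z : (ℕ × ℕ) × ℕ => h z.1.1 ++ (d z.2).1 :=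
      Computable.list_append.comp (hh.comp (Computable.fst.comp Computable.fst))
        (Computable.fst.comp hdw)
    refine Computable.cond (Primrec.and.to_comp.comp ?_ ?_) (Computable.option_some.comp hu)
      (Computable.const none)
    · exact (Primrec.nat_lt.decide.to_comp).comp (Computable.snd.comp Computable.fst) hu
    · exact hE.to_comp.comp (hb.pair hu) (Computable.snd.comp (Computable.snd.comp hdw))
  have hTm : ∀ s m u w, u ∈ T (s, m) w → m < u ∧ ∃ β, true ∈ Ψ (h s ++ β, u) := by
    intro s m u w hu
    simp only [T, Option.mem_def] at hu
    cases hc : (decide (m < (d w).2.1) && E (h s ++ (d w).1, (d w).2.1) (d w).2.2) with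
    | false => simp [hc] at hu
    | true =>
      simp only [hc, cond_true, Option.some.injEq] at hu
      simp only [Bool.and_eq_true, decide_eq_true_eq] at hc
      subst hu
      exact ⟨hc.1, (d w).1, (hE' _).2 ⟨_, hc.2⟩⟩
  have hdom : ∀ q, (Nat.rfindOpt (T q)).Dom := by
    rintro ⟨s, m⟩
    rw [Nat.rfindOpt_dom]
    obtain ⟨β, u, hmu, hu⟩ := H s m
    obtain ⟨k, hk⟩ := (hE' _).1 hu
    obtain ⟨w, hw⟩ := hds (β, u, k)
    exact ⟨w, u, by simp [T, hw, hmu, hk]⟩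
  let N : ℕ × ℕ → ℕ := fun q => (Nat.rfindOpt (T q)).get (hdom q)
  have hN : Computable N := (Partrec.rfindOpt hT).of_eq_tot fun q => Part.get_mem _
  have hN' : ∀ s m, m < N (s, m) ∧ ∃ β, true ∈ Ψ (h s ++ β, N (s, m)) := by
    intro s m
    obtain ⟨w, hw⟩ := Nat.rfindOpt_spec (Part.get_mem (hdom (s, m)))
    exact hTm s m _ w hw
  let e : ℕ → ℕ := fun n => Nat.rec 0 (fun s m => N (s, m)) n
  refine ⟨e, ?_, ?_, ?_⟩
  · exact Computable.nat_rec Computable.id (Computable.const 0) (hN.comp Computable.snd)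
  · exact strictMono_nat_of_lt_succ fun s => (hN' s (e s)).1
  · exact fun s => (hN' s (e s)).2

/-- forces bounded -/
def FB (Ψ : List Bool × ℕ →. Bool) (τ : List Bool) : Prop :=
  ∃ k, ∀ β u, k < u → true ∉ Ψ (τ ++ β, u)

/-- split above x -/
def SP (R : ℕ → Set ℕ) (Ψ : List Bool × ℕ →. Bool) (n x : ℕ) (ζ : List Bool) : Prop :=
  ∃ u v, x < u ∧ x < v ∧ true ∈ Ψ (ζ, u) ∧ true ∈ Ψ (ζ, v) ∧ u ∈ R n ∧ v ∉ R n

/-- forces split -/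
def FS (R : ℕ → Set ℕ) (Ψ : List Bool × ℕ →. Bool) (τ : List Bool) : Prop :=
  ∃ n, ∀ ρ, τ <+: ρ → ∀ x, ∃ ζ, ρ <+: ζ ∧ SP R Ψ n x ζ

theorem aux_dense (R : ℕ → Set ℕ) (hR : ComputableSeq R)
    (hno : ¬ ∃ C : Set ℕ, ComputableSet C ∧ Cohesive R C)
    (Ψ : List Bool × ℕ →. Bool) (hΨ : Partrec Ψ)
    (mono : ∀ ⦃σ τ : BinStr⦄, σ <+: τ → ∀ x b, b ∈ Ψ (σ, x) → b ∈ Ψ (τ, x)) (σ : List Bool) :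
    ∃ τ, σ <+: τ ∧ (FB Ψ τ ∨ FS R Ψ τ) := by
  by_contra hcon
  push Not at hcon
  apply hno
  obtain ⟨f, hf, hfR⟩ := hR
  have hb : ∀ τ, σ <+: τ → ∀ k, ∃ β u, k < u ∧ true ∈ Ψ (τ ++ β, u) := by
    intro τ hτ k
    have := (hcon τ hτ).1
    unfold FB at this
    push Not at this
    exact this k
  have hK : ∀ n τ, σ <+: τ → ∃ α x b, ∀ β u, x < u → true ∈ Ψ (τ ++ α ++ β, u) → f n u = b := by
    intro n τ hτ
    have := (hcon τ hτ).2
    unfold FS at this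
    push Not at this
    obtain ⟨ρ, hρ, x, hx⟩ := this n
    obtain ⟨β, u, hu, hβ⟩ := hb ρ (hτ.trans hρ) x
    obtain ⟨γ, rfl⟩ := hρ
    refine ⟨γ ++ β, x, f n u, fun δ v hv hδ => ?_⟩
    have hns := hx (τ ++ γ ++ β ++ δ) ⟨β ++ δ, by simp⟩
    have hu' : true ∈ Ψ (τ ++ γ ++ β ++ δ, u) := mono (List.prefix_append _ _) _ _ hβ
    have hv' : true ∈ Ψ (τ ++ γ ++ β ++ δ, v) := by simpa using hδ
    by_contra hne
    cases h1 : f n u with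
    | true =>
      refine hns ⟨u, v, hu, hv, hu', hv', (hfR _ _).2 h1, fun h => hne ?_⟩
      rw [(hfR _ _).1 h, h1]
    | false =>
      have h2 : f n v = true := by rw [h1] at hne; simpa using hne
      refine hns ⟨v, u, hv, hu, hv', hu', (hfR _ _).2 h2, fun h => ?_⟩
      rw [(hfR _ _).1 h] at h1
      simp at h1
  obtain ⟨d, hd, hds⟩ := aux_dec (List Bool × ℕ × Bool)
  obtain ⟨d2, hd2, hds2⟩ := aux_dec (List Bool × ℕ × ℕ)
  -- refutation
  let g : (ℕ × Bool) × (List Bool × ℕ) →. Bool := fun q =>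
    (Ψ q.2).map fun b => b && (f q.1.1 q.2.2 != q.1.2)
  have hg : Partrec g := by
    refine Partrec.map (hΨ.comp Computable.snd) ?_
    have h1 : Computable fun z : ((ℕ × Bool) × (List Bool × ℕ)) × Bool => f z.1.1.1 z.1.2.2 :=
      hf.comp (Computable.fst.comp (Computable.fst.comp Computable.fst))
        (Computable.snd.comp (Computable.snd.comp Computable.fst))
    have h2 : Computable fun z : ((ℕ × Bool) × (List Bool × ℕ)) × Bool => z.1.1.2 :=
      Computable.snd.comp (Computable.fst.comp Computable.fst)
    exact Primrec.and.to_comp.comp Computable.snd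
      (Primrec.not.to_comp.comp (Primrec.beq.to_comp.comp h1 h2))
  have hg' : ∀ n b ρ u, true ∈ g ((n, b), (ρ, u)) ↔ true ∈ Ψ (ρ, u) ∧ f n u ≠ b := by
    intro n b ρ u
    simp [g, Part.mem_map_iff]
  obtain ⟨E, hE, hE'⟩ := aux_stage hg
  let Q : ((ℕ × List Bool) × ℕ) → ℕ → Bool := fun q w =>
    decide ((d q.2).2.1 < (d2 w).2.1) &&
      E ((q.1.1, (d q.2).2.2), (q.1.2 ++ (d q.2).1 ++ (d2 w).1, (d2 w).2.1)) (d2 w).2.2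
  have hQ : Primrec₂ Q := by
    have hc : Primrec fun z : ((ℕ × List Bool) × ℕ) × ℕ => d z.1.2 :=
      hd.comp (Primrec.snd.comp Primrec.fst)
    have hw : Primrec fun z : ((ℕ × List Bool) × ℕ) × ℕ => d2 z.2 := hd2.comp Primrec.snd
    have hu : Primrec fun z : ((ℕ × List Bool) × ℕ) × ℕ => (d2 z.2).2.1 :=
      Primrec.fst.comp (Primrec.snd.comp hw)
    refine Primrec.and.comp
      (Primrec.nat_lt.comp (Primrec.fst.comp (Primrec.snd.comp hc)) hu).decide
      (hE.comp (Primrec.pair (Primrec.pair ?_ ?_) (Primrec.pair ?_ hu)) ?_)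
    · exact Primrec.fst.comp (Primrec.fst.comp Primrec.fst)
    · exact Primrec.snd.comp (Primrec.snd.comp hc)
    · exact Primrec.list_append.comp (Primrec.list_append.comp
        (Primrec.snd.comp (Primrec.fst.comp Primrec.fst)) (Primrec.fst.comp hc))
        (Primrec.fst.comp hw)
    · exact Primrec.snd.comp (Primrec.snd.comp hw)
  have hQ' : ∀ n τ c, (∀ w, Q ((n, τ), c) w = false) ↔
      ∀ β u, (d c).2.1 < u → true ∈ Ψ (τ ++ (d c).1 ++ β, u) → f n u = (d c).2.2 := by
    intro n τ c
    constructor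
    · intro h β u hu hβ
      by_contra hne
      obtain ⟨k, hk⟩ := (hE' _).1 ((hg' n (d c).2.2 (τ ++ (d c).1 ++ β) u).2 ⟨hβ, hne⟩)
      obtain ⟨w, hw⟩ := hds2 (β, u, k)
      have := h w
      simp only [Q, hw, hu, hk] at this
      simp at this
    · intro h w
      rw [← Bool.not_eq_true]
      intro hw
      simp only [Q, Bool.and_eq_true, decide_eq_true_eq] at hw
      have := (hg' _ _ _ _).1 ((hE' _).2 ⟨_, hw.2⟩)
      exact this.2 (h _ _ hw.1 this.1)
  obtain ⟨h, hh, hσ, hlim⟩ := aux_limit σ Q hQ (fun c => (d c).1) (Primrec.fst.comp hd) (by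
    intro n τ hτ
    obtain ⟨α, x, b, hα⟩ := hK n τ hτ
    obtain ⟨c, hc⟩ := hds (α, x, b)
    refine ⟨c, (hQ' n τ c).2 ?_⟩
    rw [hc]
    exact hα)
  obtain ⟨e, he, hm, hee⟩ := aux_enum Ψ hΨ h hh (fun s m => hb (h s) (hσ s) m)
  refine ⟨Set.range e, aux_range e he hm, Set.infinite_range_of_injective hm.injective, fun n => ?_⟩
  obtain ⟨τ, c, s0, hc, hs⟩ := hlim n
  rw [hQ'] at hc
  have hev : ∀ s, s0 + (d c).2.1 ≤ s → f n (e (s+1)) = (d c).2.2 := by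
    intro s hs1
    obtain ⟨β, hβ⟩ := hee s
    obtain ⟨γ, hγ⟩ := hs s (by omega)
    refine hc (γ ++ β) _ ?_ ?_
    · have := hm.id_le (s+1)
      simp only [id] at this
      omega
    · rw [← hγ] at hβ
      simpa using hβ
  have hfin : ∀ A : Set ℕ, (∀ s, s0 + (d c).2.1 ≤ s → e (s+1) ∈ A) →
      SubsetStar (Set.range e) A := by
    intro A hA
    refine ((Set.finite_Iic (s0 + (d c).2.1)).image e).subset ?_
    rintro _ ⟨⟨i, rfl⟩, hi⟩
    refine ⟨i, ?_, rfl⟩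
    by_contra hlt
    simp only [Set.mem_Iic, not_le] at hlt
    obtain ⟨j, rfl⟩ : ∃ j, i = j + 1 := ⟨i - 1, by omega⟩
    exact hi (hA j (by omega))
  cases hbb : (d c).2.2 with
  | true => exact Or.inl (hfin _ fun s h1 => (hfR _ _).2 (by rw [hev s h1, hbb]))
  | false =>
    refine Or.inr (hfin _ fun s h1 h2 => ?_)
    have := (hfR _ _).1 h2
    rw [hev s h1, hbb] at this
    simp at this

theorem aux_max {σ τ : List Bool} {X : ℕ → Bool} (h1 : IsInitSeg σ X) (h2 : IsInitSeg τ X) :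
    ∃ μ, IsInitSeg μ X ∧ σ <+: μ ∧ τ <+: μ := by
  rcases le_total σ.length τ.length with h | h
  · exact ⟨τ, h2, aux_prefix h1 h2 h, List.prefix_refl _⟩
  · exact ⟨σ, h1, List.prefix_refl _, aux_prefix h2 h1 h⟩

/-- **Answer to Cai's question.** If `R` is a computable sequence admitting no
computable `R`-cohesive set, then there exists a non-computable `X` computing
no `R`-cohesive set. -/
theorem exists_noncomputable_computing_no_cohesive
    (R : ℕ → Set ℕ) (hR : ComputableSeq R)
    (hno : ¬ ∃ C : Set ℕ, ComputableSet C ∧ Cohesive R C) :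
    ∃ X : ℕ → Bool, ¬ ComputableSet {n | X n = true} ∧
      ∀ C : Set ℕ, ReducibleToFun C X → ¬ Cohesive R C := by
  have c1 : Countable {f : List Bool × ℕ →. Bool // Partrec f} := aux_countable
  have c2 : Countable {f : ℕ →. Bool // Partrec f} := aux_countable
  let M : (List Bool × ℕ →. Bool) → Prop := fun Ψ =>
    ∀ ⦃σ τ : BinStr⦄, σ <+: τ → ∀ x b, b ∈ Ψ (σ, x) → b ∈ Ψ (τ, x)
  let D1' : {f : List Bool × ℕ →. Bool // Partrec f} → Set (List Bool) := fun Ψ =>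
    {τ | M Ψ.1 → FB Ψ.1 τ ∨ FS R Ψ.1 τ}
  let D2' : {f : List Bool × ℕ →. Bool // Partrec f} × ℕ × ℕ → Set (List Bool) := fun q =>
    {τ | SP R q.1.1 q.2.1 q.2.2 τ ∨ ∀ ζ, τ <+: ζ → ¬ SP R q.1.1 q.2.1 q.2.2 ζ}
  let D3' : {f : ℕ →. Bool // Partrec f} → Set (List Bool) := fun g =>
    {τ | ∃ i < τ.length, τ.getD i false ∉ g.1 i}
  obtain ⟨X, hX⟩ := aux_generic (fun i => Sum.elim D1' (Sum.elim D2' D3') i) (by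
    rintro (Ψ | q | g) σ
    · by_cases hM : M Ψ.1
      · obtain ⟨τ, h1, h2⟩ := aux_dense R hR hno Ψ.1 Ψ.2 hM σ
        exact ⟨τ, h1, fun _ => h2⟩
      · exact ⟨σ, List.prefix_refl _, fun h => (hM h).elim⟩
    · by_cases hq : ∃ ζ, σ <+: ζ ∧ SP R q.1.1 q.2.1 q.2.2 ζ
      · obtain ⟨ζ, h1, h2⟩ := hq
        exact ⟨ζ, h1, Or.inl h2⟩
      · push Not at hq
        exact ⟨σ, List.prefix_refl _, Or.inr hq⟩
    · by_cases ht : true ∈ g.1 σ.length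
      · refine ⟨σ ++ [false], List.prefix_append _ _, σ.length, by simp, ?_⟩
        intro hf
        simp at hf
        have := Part.mem_unique ht hf
        simp at this
      · refine ⟨σ ++ [true], List.prefix_append _ _, σ.length, by simp, ?_⟩
        simpa using ht)
  refine ⟨X, ?_, ?_⟩
  · rintro ⟨f, hf, hfX⟩
    obtain ⟨τ, hτ, i, hi, hne⟩ := hX (Sum.inr (Sum.inr ⟨_, hf.partrec⟩))
    apply hne
    rw [hτ i hi]
    have := hfX i
    simp only [Set.mem_setOf_eq] at this
    have h2 : X i = f i := Bool.eq_iff_iff.2 this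
    rw [h2]
    exact Part.mem_some _
  · rintro C ⟨Ψ, hΨ, mono, htot, hval⟩ ⟨hinf, hcoh⟩
    have hmem : ∀ u ∈ C, ∃ σ, IsInitSeg σ X ∧ true ∈ Ψ (σ, u) := by
      intro u hu
      obtain ⟨σ, h1, h2⟩ := htot u
      refine ⟨σ, h1, ?_⟩
      have h3 := Part.get_mem h2
      have h4 := (hval σ u _ h1 h3).2 hu
      rwa [h4] at h3
    obtain ⟨τ, hτ, hτD⟩ := hX (Sum.inl ⟨Ψ, hΨ⟩)
    rcases hτD mono with ⟨k, hk⟩ | ⟨n, hn⟩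
    · obtain ⟨u, hu, hku⟩ := hinf.exists_gt k
      obtain ⟨σ, h1, h2⟩ := hmem u hu
      obtain ⟨μ, hμ, ha, hb⟩ := aux_max h1 hτ
      obtain ⟨β, rfl⟩ := hb
      exact hk β u hku (mono ha _ _ h2)
    · have hsp : ∀ x, ∃ u v, x < u ∧ x < v ∧ u ∈ C ∧ v ∈ C ∧ u ∈ R n ∧ v ∉ R n := by
        intro x
        obtain ⟨ρ, hρ, hρD⟩ := hX (Sum.inr (Sum.inl (⟨Ψ, hΨ⟩, n, x)))
        rcases hρD with ⟨u, v, h1, h2, h3, h4, h5⟩ | hbad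
        · exact ⟨u, v, h1, h2, (hval _ _ _ hρ h3).1 rfl, (hval _ _ _ hρ h4).1 rfl, h5⟩
        · obtain ⟨μ, hμ, ha, hb⟩ := aux_max hρ hτ
          obtain ⟨ζ, hζ, hs⟩ := hn μ hb x
          exact (hbad ζ (ha.trans hζ) hs).elim
      rcases hcoh n with h | h
      · obtain ⟨x, hx⟩ := h.bddAbove
        obtain ⟨u, v, h1, h2, h3, h4, h5, h6⟩ := hsp x
        exact absurd (hx ⟨h4, h6⟩) (by omega)
      · obtain ⟨x, hx⟩ := h.bddAbove
        obtain ⟨u, v, h1, h2, h3, h4, h5, h6⟩ := hsp x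
        exact absurd (hx ⟨h3, fun h => h h5⟩) (by omega)
end

section
/- Let S be a computable binary tree and Φ a use-monotone Turing functional. Suppose that there is no infinite computable binary tree T ⊆ S with m([T]) > 0 such that for some x, every Y ∈ [T] satisfies that the cardinality of dom Φ(Y) is < x. Then m({Y ∈ [S] : dom Φ(Y) is finite}) = 0. -/
open MeasureTheory

theorem aux_stage_s10 (F : TuringFunctional) : ∃ e : ℕ → BinStr × ℕ → Bool, Primrec₂ e ∧
    (∀ k l p, k ≤ l → e k p = true → e l p = true) ∧
    ∀ p, (F.Φ p).Dom ↔ ∃ k, e k p = true := by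
  obtain ⟨c, hc⟩ := Nat.Partrec.Code.exists_code.1 F.partrec
  refine ⟨fun k p => (Nat.Partrec.Code.evaln k c (Encodable.encode p)).isSome, ?_, ?_, ?_⟩
  · exact Primrec.option_isSome.comp (Nat.Partrec.Code.primrec_evaln.comp
      (Primrec.pair (Primrec.pair Primrec.fst (Primrec.const c))
        (Primrec.encode.comp Primrec.snd)))
  · intro k l p hkl h
    rw [Option.isSome_iff_exists] at *
    obtain ⟨a, ha⟩ := h
    exact ⟨a, Nat.Partrec.Code.evaln_mono hkl ha⟩
  · intro p
    have h1 : (F.Φ p).Dom ↔ (c.eval (Encodable.encode p)).Dom := by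
      rw [hc]; simp
    rw [h1, Part.dom_iff_mem]
    simp only [Nat.Partrec.Code.evaln_complete, Option.isSome_iff_exists, Option.mem_def]
    exact exists_comm

def auxQ (e : ℕ → BinStr × ℕ → Bool) (x : ℕ) (σ : BinStr) : Prop :=
  ∃ j ∈ List.range (σ.length + 1), e σ.length (σ.take j, x) = true

theorem auxQ_prim {e : ℕ → BinStr × ℕ → Bool} (he : Primrec₂ e) : PrimrecRel (auxQ e) := by
  have h : PrimrecRel fun (j : ℕ) (p : ℕ × BinStr) =>
      e p.2.length (p.2.take j, p.1) = true := by
    refine Primrec.eq.comp (he.comp ?_ ?_) (Primrec.const true)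
    · exact Primrec.list_length.comp (Primrec.snd.comp Primrec.snd)
    · exact Primrec.pair (Primrec.list_take.comp Primrec.fst (Primrec.snd.comp Primrec.snd))
        (Primrec.fst.comp Primrec.snd)
  exact h.exists_mem_list.comp
    (Primrec.list_range.comp (Primrec.succ.comp (Primrec.list_length.comp Primrec.snd)))
    Primrec.id

open Classical in
noncomputable def auxL (e : ℕ → BinStr × ℕ → Bool) (σ : BinStr) : Finset ℕ :=
  (Finset.range σ.length).filter (fun x => auxQ e x σ)

theorem auxL_prim {e : ℕ → BinStr × ℕ → Bool} (he : Primrec₂ e) :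
    Primrec fun σ => (auxL e σ).card := by
  classical
  have h := Primrec.list_length.comp ((auxQ_prim he).listFilter.comp
    (Primrec.list_range.comp Primrec.list_length) Primrec.id)
  refine h.of_eq fun σ => ?_
  rw [← List.toFinset_card_of_nodup (List.nodup_range.filter _)]
  congr 1
  ext x
  simp [auxL]

theorem initSeg_prefix {σ τ : BinStr} {Y : ℕ → Bool} (h : IsInitSeg σ Y) (hτ : τ <+: σ) :
    IsInitSeg τ Y := by
  intro i hi
  obtain ⟨r, rfl⟩ := hτ
  have := h i (by simp; omega)
  rw [← this, List.getD_append _ _ _ _ hi]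

theorem initSeg_eq {σ : BinStr} {Y : ℕ → Bool} (h : IsInitSeg σ Y) :
    σ = (List.range σ.length).map Y := by
  apply List.ext_getElem
  · simp
  · intro i h1 h2
    have := h i h1
    simp [← this, h1]

theorem initSeg_map (Y : ℕ → Bool) (n : ℕ) : IsInitSeg ((List.range n).map Y) Y := by
  intro i hi
  simp at hi
  simp [hi]

theorem auxL_mono {e : ℕ → BinStr × ℕ → Bool}
    (hm : ∀ k l p, k ≤ l → e k p = true → e l p = true) {τ σ : BinStr} (h : τ <+: σ) :
    auxL e τ ⊆ auxL e σ := by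
  intro x hx
  simp only [auxL, auxQ, Finset.mem_filter, Finset.mem_range, List.mem_range] at hx ⊢
  obtain ⟨h1, j, hj, hx⟩ := hx
  have hl := h.length_le
  refine ⟨by omega, j, by omega, ?_⟩
  obtain ⟨r, rfl⟩ := h
  rw [List.take_append_of_le_length (by omega)]
  exact hm _ _ _ hl hx

theorem auxL_sub (F : TuringFunctional) {e : ℕ → BinStr × ℕ → Bool}
    (hd : ∀ p, (F.Φ p).Dom ↔ ∃ k, e k p = true) {σ : BinStr} {Y : ℕ → Bool}
    (h : IsInitSeg σ Y) : (auxL e σ : Set ℕ) ⊆ F.domF Y := by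
  intro x hx
  replace hx : x ∈ auxL e σ := Finset.mem_coe.1 hx
  simp only [auxL, auxQ, Finset.mem_filter, Finset.mem_range, List.mem_range] at hx
  obtain ⟨h1, j, hj, hx⟩ := hx
  exact ⟨σ.take j, initSeg_prefix h (List.take_prefix _ _), (hd _).2 ⟨_, hx⟩⟩

theorem auxL_exists (F : TuringFunctional) {e : ℕ → BinStr × ℕ → Bool}
    (hm : ∀ k l p, k ≤ l → e k p = true → e l p = true)
    (hd : ∀ p, (F.Φ p).Dom ↔ ∃ k, e k p = true) {Y : ℕ → Bool} {x : ℕ} (hx : x ∈ F.domF Y) :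
    ∃ n, x ∈ auxL e ((List.range n).map Y) := by
  obtain ⟨σ, hσ, hx⟩ := hx
  obtain ⟨k, hk⟩ := (hd _).1 hx
  refine ⟨max (x + 1) (max k σ.length), ?_⟩
  simp only [auxL, auxQ, Finset.mem_filter, Finset.mem_range, List.mem_range, List.length_map,
    List.length_range]
  refine ⟨by omega, σ.length, by omega, ?_⟩
  rw [← List.map_take, List.take_range, min_eq_left (by omega), ← initSeg_eq hσ]
  exact hm _ _ _ (by omega) hk

theorem auxL_exists_all (F : TuringFunctional) {e : ℕ → BinStr × ℕ → Bool}
    (hm : ∀ k l p, k ≤ l → e k p = true → e l p = true)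
    (hd : ∀ p, (F.Φ p).Dom ↔ ∃ k, e k p = true) {Y : ℕ → Bool} (B : Finset ℕ)
    (hB : (B : Set ℕ) ⊆ F.domF Y) :
    ∃ n, B ⊆ auxL e ((List.range n).map Y) := by
  have : ∀ x ∈ B, ∃ n, x ∈ auxL e ((List.range n).map Y) :=
    fun x hx => auxL_exists F hm hd (hB hx)
  choose! f hf using this
  refine ⟨B.sup f, fun x hx => auxL_mono hm ?_ (hf x hx)⟩
  have := Finset.le_sup (f := f) hx
  obtain ⟨d, hd⟩ := Nat.exists_eq_add_of_le this
  rw [hd, List.range_add, List.map_append]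
  exact List.prefix_append _ _

/-- If no infinite computable subtree `T ⊆ S` of positive measure bounds `dom Φ(Y)`
for all `Y ∈ [T]`, then almost every `Y ∈ [S]` has `dom Φ(Y)` infinite. -/
theorem measure_finite_domF_zero
    (S : Set BinStr) (hStree : IsTree S) (hScomp : ComputableStrSet S)
    (F : TuringFunctional)
    (h : ¬ ∃ (T : Set BinStr) (x : ℕ), IsTree T ∧ ComputableStrSet T ∧
        T.Infinite ∧ T ⊆ S ∧ 0 < fairCoin (paths T) ∧
        ∀ Y ∈ paths T, (F.domF Y).encard < (x : ℕ∞)) :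
    fairCoin {Y | Y ∈ paths S ∧ (F.domF Y).Finite} = 0 := by

  obtain ⟨e, he, hm, hd⟩ := aux_stage_s10 F
  let T : ℕ → Set BinStr := fun k => {σ | σ ∈ S ∧ (auxL e σ).card < k}
  have hsub : {Y | Y ∈ paths S ∧ (F.domF Y).Finite} ⊆ ⋃ k, paths (T k) := by
    rintro Y ⟨hY, hf⟩
    refine Set.mem_iUnion.2 ⟨hf.toFinset.card + 1, fun σ hσ => ⟨hY σ hσ, ?_⟩⟩
    refine Nat.lt_succ_of_le (Finset.card_le_card fun x hx => ?_)
    rw [Set.Finite.mem_toFinset]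
    exact auxL_sub F hd hσ hx
  refine measure_mono_null hsub (measure_iUnion_null fun k => ?_)
  by_contra hne
  refine h ⟨T k, k, ?_, ?_, ?_, fun σ hσ => hσ.1, pos_iff_ne_zero.2 hne, ?_⟩
  · intro σ hσ τ hτ
    exact ⟨hStree σ hσ.1 τ hτ, lt_of_le_of_lt (Finset.card_le_card (auxL_mono hm hτ)) hσ.2⟩
  · obtain ⟨f, hf, hfS⟩ := hScomp
    refine ⟨fun σ => f σ && decide ((auxL e σ).card < k), ?_, ?_⟩
    · refine Primrec.and.to_comp.comp hf (Primrec.to_comp ?_)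
      exact (Primrec.nat_lt.comp (auxL_prim he) (Primrec.const k)).decide
    · intro σ
      simp [T, hfS]
  · obtain ⟨Y, hY⟩ := nonempty_of_measure_ne_zero hne
    refine Set.infinite_of_injective_forall_mem (f := fun n => (List.range n).map Y) ?_
      (fun n => hY _ (initSeg_map Y n))
    intro a b hab
    simpa using congrArg List.length hab
  · intro Y hY
    by_contra hlt
    rw [not_lt] at hlt
    obtain ⟨B, hB, hBk⟩ := Set.exists_subset_encard_eq hlt
    have hBf : B.Finite := Set.finite_of_encard_eq_coe hBk
    lift B to Finset ℕ using hBf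
    obtain ⟨n, hn⟩ := auxL_exists_all F hm hd B hB
    have h1 := (hY _ (initSeg_map Y n)).2
    have h2 := Finset.card_le_card hn
    rw [Set.encard_coe_eq_coe_finsetCard] at hBk
    have h3 : B.card = k := by exact_mod_cast hBk
    omega
end
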